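/- Let g : ℕ → ℂ satisfy Σ_{n≥0} g(n)q^n = (∏_{k≥0}(1 − q^{10k+2})(1 − q^{10k+8})) · (∏_{k≥0}(1 − q^{10k+4})(1 − q^{10k+6}))² · (∏_{k≥0}(1 − q^{5k+2})(1 − q^{5k+3}))^{−2} for all complex q with |q| < 1. Then, as n → ∞ restricted to n ≢ 1 (mod 5), g(n) is asymptotically equivalent to 30^{−1/4}·( sin(π/5) + sin((2π/5)(2n+1)) )·(n − 1/3)^{−3/4}·exp((√2·π/√15)·√(n − 1/3)); that is, the ratio of the two sides tends to 1 along integers n with n ≢ 1 (mod 5). -/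

import Mathlib

open Filter Topology Complex


/-- Gaussian binomials. -/
noncomputable def tgGb (y : ℂ) : ℕ → ℕ → ℂ
  | _, 0 => 1
  | 0, _ + 1 => 0
  | M + 1, j + 1 => tgGb y M j + y ^ (j + 1) * tgGb y M (j + 1)

noncomputable def tgPoch (y : ℂ) (n : ℕ) : ℂ := ∏ i ∈ Finset.range n, (1 - y ^ (i + 1))

lemma tgGb_zero_right (y : ℂ) (M : ℕ) : tgGb y M 0 = 1 := by
  cases M <;> simp [tgGb]

lemma tgGb_gt (y : ℂ) : ∀ (M j : ℕ), M < j → tgGb y M j = 0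
  | 0, 0, h => by omega
  | 0, j + 1, _ => by simp [tgGb]
  | M + 1, 0, h => by omega
  | M + 1, j + 1, h => by
    simp [tgGb, tgGb_gt y M j (by omega), tgGb_gt y M (j + 1) (by omega)]

lemma tgGb_self (y : ℂ) : ∀ (M : ℕ), tgGb y M M = 1
  | 0 => by simp [tgGb]
  | M + 1 => by simp [tgGb, tgGb_self y M, tgGb_gt y M (M + 1) (by omega)]

lemma tgGb_poch (y : ℂ) (n : ℕ) : ∀ a b : ℕ, a + b = n →
    tgGb y (a + b) a * (tgPoch y a * tgPoch y b) = tgPoch y (a + b) := by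
  induction n with
  | zero => intro a b h; obtain ⟨rfl, rfl⟩ : a = 0 ∧ b = 0 := by omega
            simp [tgGb, tgPoch]
  | succ n ih =>
    intro a b h
    rcases a with _ | a
    · simp [tgGb_zero_right, tgPoch]
    rcases b with _ | b
    · simp [tgGb_self, tgPoch]
    have h1 := ih a (b + 1) (by omega)
    have h2 := ih (a + 1) b (by omega)
    have e1 : a + 1 + (b + 1) = (a + (b + 1)) + 1 := by omega
    have e2 : a + 1 + b = a + (b + 1) := by omega
    rw [e2] at h2
    rw [e1, tgGb]
    have p : ∀ m, tgPoch y (m + 1) = tgPoch y m * (1 - y ^ (m + 1)) := fun m => by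
      simp [tgPoch, Finset.prod_range_succ]
    rw [p (a + (b + 1))]
    rw [p b] at h1 ⊢
    rw [p a] at h2 ⊢
    rw [show a + (b+1) + 1 = (a + 1) + (b + 1) by omega, pow_add y (a + 1)]
    linear_combination (1 - y ^ (a + 1)) * h1 + y ^ (a + 1) * (1 - y ^ (b + 1)) * h2

lemma tgGb_qbinom (y : ℂ) (M : ℕ) : ∀ v : ℂ, ∏ k ∈ Finset.range M, (1 - v * y ^ k) =
    ∑ j ∈ Finset.range (M + 1), tgGb y M j * (-1) ^ j * y ^ (j.choose 2) * v ^ j := by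
  induction M with
  | zero => intro v; simp [tgGb]
  | succ M ih =>
    intro v
    rw [Finset.prod_range_succ']
    have h := ih (v * y)
    have e : ∏ k ∈ Finset.range M, (1 - v * y ^ (k + 1)) =
      ∏ k ∈ Finset.range M, (1 - v * y * y ^ k) := Finset.prod_congr rfl fun k _ => by ring
    rw [e, h, Finset.sum_range_succ' _ (M + 1)]
    simp only [tgGb, tgGb_zero_right]
    have h3 : ∑ j ∈ Finset.range (M + 1), tgGb y M j * (-1) ^ j * y ^ (j.choose 2) * (v * y) ^ j
      = (∑ j ∈ Finset.range (M + 1), tgGb y M (j + 1) * (-1) ^ (j + 1) *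
          y ^ ((j + 1).choose 2) * (v * y) ^ (j + 1)) + 1 := by
      rw [Finset.sum_range_succ', Finset.sum_range_succ _ M, tgGb_gt y M (M + 1) (by omega)]
      simp [tgGb_zero_right]
    have h4 : ∀ S : ℂ, S * (1 - v * y ^ 0) = S - v * S := fun S => by ring
    rw [h4]
    nth_rewrite 1 [h3]
    rw [Finset.mul_sum]
    simp only [pow_zero, Nat.choose_zero_succ, mul_one]
    rw [add_sub_right_comm, ← Finset.sum_sub_distrib]
    congr 1
    refine Finset.sum_congr rfl fun j _ => ?_
    have : (j + 1).choose 2 = j.choose 2 + j := by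
      rw [Nat.choose_succ_succ' j 1]; simp; omega
    rw [this]
    ring

lemma tg_choose_cast (j N : ℕ) : ((j.choose 2 : ℕ) : ℤ) - N * j =
    ((j : ℤ) - N) * ((j : ℤ) - N - 1) / 2 - (N * (N + 1) / 2 : ℤ) := by
  have h1 : ((j.choose 2 : ℕ) : ℤ) * 2 = j * (j - 1) := by
    rw [Nat.choose_two_right]
    rcases j with _ | j
    · simp
    · have := Nat.div_mul_cancel (Nat.even_mul_pred_self (j + 1)).two_dvd
      simp only [Nat.add_sub_cancel] at this ⊢
      have h' : (((j + 1) * j / 2 : ℕ) : ℤ) * 2 = (((j + 1) * j : ℕ) : ℤ) := by exact_mod_cast this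
      rw [h']
      push_cast; ring
  have h2 : ((j : ℤ) - N) * ((j : ℤ) - N - 1) / 2 * 2 = ((j : ℤ) - N) * ((j : ℤ) - N - 1) :=
    Int.ediv_mul_cancel (Int.even_mul_pred_self _).two_dvd
  have h3 : (N * (N + 1) / 2 : ℤ) * 2 = N * (N + 1) :=
    Int.ediv_mul_cancel (Int.even_mul_succ_self _).two_dvd
  have : (((j.choose 2 : ℕ) : ℤ) - N * j) * 2 = (((j : ℤ) - N) * ((j : ℤ) - N - 1) / 2 - (N * (N + 1) / 2 : ℤ)) * 2 := by
    rw [sub_mul, sub_mul, h1, h2, h3]; ring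
  omega

lemma tg_prod_flip (y u : ℂ) (hy : y ≠ 0) (hu : u ≠ 0) (N : ℕ) :
    ∏ k ∈ Finset.range N, (1 - u * y ^ (-(k + 1 : ℤ))) =
    (-1) ^ (N : ℤ) * u ^ (N : ℤ) * y ^ (-(N * (N + 1) / 2 : ℤ)) *
      ∏ k ∈ Finset.range N, (1 - u⁻¹ * y ^ (k + 1)) := by
  induction N with
  | zero => simp
  | succ N ih =>
    rw [Finset.prod_range_succ, ih, Finset.prod_range_succ]
    have h3 : (((N + 1 : ℕ) : ℤ) * (((N + 1 : ℕ) : ℤ) + 1) / 2 : ℤ) = (N * (N + 1) / 2 : ℤ) + (N + 1) := by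
      have h1 : (N * (N + 1) / 2 : ℤ) * 2 = N * (N + 1) :=
        Int.ediv_mul_cancel (Int.even_mul_succ_self _).two_dvd
      have h2 : (((N + 1 : ℕ) : ℤ) * (((N + 1 : ℕ) : ℤ) + 1) / 2 : ℤ) * 2 = ((N + 1 : ℕ) : ℤ) * (((N + 1 : ℕ) : ℤ) + 1) :=
        Int.ediv_mul_cancel (Int.even_mul_succ_self _).two_dvd
      push_cast at h2 ⊢
      have : (((N + 1 : ℤ)) * (((N + 1 : ℤ)) + 1) / 2 : ℤ) * 2 = ((N * (N + 1) / 2 : ℤ) + (N + 1)) * 2 := by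
        linear_combination h2 - h1
      omega
    rw [h3, neg_add (N * (N + 1) / 2 : ℤ), zpow_add₀ hy (-(N * (N + 1) / 2 : ℤ)), Nat.cast_succ, zpow_add₀ hu, zpow_add₀ (by norm_num : (-1 : ℂ) ≠ 0)]
    have : y ^ (-((N : ℤ) + 1)) = (y ^ (N + 1))⁻¹ := by
      rw [zpow_neg]; norm_cast
    rw [this]
    have hyN : y ^ (N + 1) ≠ 0 := pow_ne_zero _ hy
    field_simp
    ring

lemma tg_finite_jtp (y u : ℂ) (hy : y ≠ 0) (hu : u ≠ 0) (N : ℕ) :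
    (∏ k ∈ Finset.range N, (1 - u * y ^ k)) * ∏ k ∈ Finset.range N, (1 - u⁻¹ * y ^ (k + 1)) =
    ∑ j ∈ Finset.range (2 * N + 1), tgGb y (2 * N) j * ((-1) ^ ((j : ℤ) - N) *
      y ^ (((j : ℤ) - N) * ((j : ℤ) - N - 1) / 2) * u ^ ((j : ℤ) - N)) := by
  have h := tgGb_qbinom y (2 * N) (u * y ^ (-(N : ℤ)))
  have h1 : ∏ k ∈ Finset.range (2 * N), (1 - u * y ^ (-(N : ℤ)) * y ^ k) =
      (∏ k ∈ Finset.range N, (1 - u * y ^ (-(k + 1 : ℤ)))) * ∏ k ∈ Finset.range N, (1 - u * y ^ k) := by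
    rw [two_mul, Finset.prod_range_add, ← Finset.prod_range_reflect]
    congr 1
    · refine Finset.prod_congr rfl fun k hk => ?_
      rw [Finset.mem_range] at hk
      rw [mul_assoc, ← zpow_natCast, ← zpow_add₀ hy]
      congr 3
      omega
    · refine Finset.prod_congr rfl fun k hk => ?_
      rw [mul_assoc, ← zpow_natCast, ← zpow_natCast, ← zpow_add₀ hy]
      congr 3
      push_cast; omega
  rw [h1, tg_prod_flip y u hy hu] at h
  have hW : (-1 : ℂ) ^ (N : ℤ) * u ^ (N : ℤ) * y ^ (-(N * (N + 1) / 2 : ℤ)) ≠ 0 :=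
    mul_ne_zero (mul_ne_zero (zpow_ne_zero _ (by norm_num)) (zpow_ne_zero _ hu)) (zpow_ne_zero _ hy)
  apply mul_left_cancel₀ hW
  rw [Finset.mul_sum]
  refine Eq.trans (by ring) (h.trans ?_)
  refine Finset.sum_congr rfl fun j _ => ?_
  have e1 : (-1 : ℂ) ^ j = (-1) ^ (N : ℤ) * (-1) ^ ((j : ℤ) - N) := by
    rw [← zpow_add₀ (by norm_num), ← zpow_natCast]; congr 1; ring
  have e2 : (u * y ^ (-(N : ℤ))) ^ j = u ^ (N : ℤ) * u ^ ((j : ℤ) - N) * y ^ (-(N * j : ℤ)) := by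
    rw [mul_pow, ← zpow_add₀ hu, ← zpow_natCast, ← zpow_natCast, ← zpow_mul]
    congr 2 <;> ring
  have e3 : y ^ (j.choose 2) * y ^ (-(N * j : ℤ)) = y ^ (-(N * (N + 1) / 2 : ℤ)) *
      y ^ (((j : ℤ) - N) * ((j : ℤ) - N - 1) / 2) := by
    rw [← zpow_natCast, ← zpow_add₀ hy, ← zpow_add₀ hy]
    congr 1
    have := tg_choose_cast j N
    linarith
  rw [e1, e2]
  linear_combination (tgGb y (2 * N) j * ((-1) ^ (N : ℤ) * (-1) ^ ((j : ℤ) - N)) * u ^ (N : ℤ) * u ^ ((j : ℤ) - N)) * e3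

lemma tg_poch_bounds (y : ℂ) (hy : ‖y‖ < 1) : ∃ P : ℂ, P ≠ 0 ∧ P = ∏' k : ℕ, (1 - y ^ (k + 1)) ∧
    Tendsto (tgPoch y) atTop (𝓝 P) ∧ (∀ n, tgPoch y n ≠ 0) ∧
    ∃ B b : ℝ, 0 < b ∧ ∀ n, ‖tgPoch y n‖ ≤ B ∧ b ≤ ‖tgPoch y n‖ := by
  have hs : Summable fun k : ℕ => ‖-y ^ (k + 1)‖ := by
    simp only [norm_neg, norm_pow]
    exact (summable_nat_add_iff 1).2 (summable_geometric_of_lt_one (norm_nonneg _) hy)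
  have hne : ∀ k : ℕ, 1 + -y ^ (k + 1) ≠ 0 := fun k h => by
    have : y ^ (k + 1) = 1 := by linear_combination -h
    have h2 := congrArg norm this
    rw [norm_pow, norm_one] at h2
    exact absurd h2 (pow_lt_one₀ (norm_nonneg _) hy (by omega)).ne
  have hP := tprod_one_add_ne_zero_of_summable hne hs
  have hm := (multipliable_one_add_of_summable hs).hasProd.tendsto_prod_nat
  simp only [← sub_eq_add_neg] at hP hm hne
  have hn : ∀ n, tgPoch y n ≠ 0 := fun n => Finset.prod_ne_zero_iff.2 fun k _ => hne k
  have ht : Tendsto (tgPoch y) atTop (𝓝 (∏' k : ℕ, (1 - y ^ (k + 1)))) := hm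
  refine ⟨_, hP, rfl, ht, hn, ?_⟩
  obtain ⟨B, hB⟩ := ht.norm.bddAbove_range
  obtain ⟨c, hc⟩ := (ht.inv₀ hP).norm.bddAbove_range
  have hc0 : 0 < c := lt_of_lt_of_le (norm_pos_iff.2 (inv_ne_zero (hn 0))) (hc ⟨0, rfl⟩)
  refine ⟨B, c⁻¹, inv_pos.2 hc0, fun n => ⟨hB ⟨n, rfl⟩, ?_⟩⟩
  have := hc ⟨n, rfl⟩
  simp only [norm_inv] at this
  exact inv_le_of_inv_le₀ (norm_pos_iff.2 (hn n)) this

theorem tg_jtp (y u : ℂ) (hy0 : y ≠ 0) (hy : ‖y‖ < 1) (hu : u ≠ 0)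
    (hs : Summable fun n : ℤ => (-1 : ℂ) ^ n * y ^ (n * (n - 1) / 2) * u ^ n) :
    (∏' k : ℕ, (1 - u * y ^ k)) * (∏' k : ℕ, (1 - u⁻¹ * y ^ (k + 1))) * (∏' k : ℕ, (1 - y ^ (k + 1)))
    = ∑' n : ℤ, (-1 : ℂ) ^ n * y ^ (n * (n - 1) / 2) * u ^ n := by
  obtain ⟨P, hP0, hP, hPt, hn, B, b, hb, hBb⟩ := tg_poch_bounds y hy
  rw [← hP]
  set t : ℤ → ℂ := fun n => (-1 : ℂ) ^ n * y ^ (n * (n - 1) / 2) * u ^ n with ht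
  set f : ℕ → ℤ → ℂ := fun N n => if n ∈ Finset.Icc (-(N : ℤ)) N then
    tgGb y (2 * N) (n + N).toNat * t n else 0 with hf
  have hgb : ∀ (N : ℕ) (n : ℤ), n ∈ Finset.Icc (-(N : ℤ)) N → tgGb y (2 * N) (n + N).toNat =
      tgPoch y (2 * N) / (tgPoch y (n + N).toNat * tgPoch y (N - n).toNat) := by
    intro N n h
    rw [Finset.mem_Icc] at h
    have := tgGb_poch y (2 * N) (n + N).toNat (N - n).toNat (by omega)
    rw [show (n + N).toNat + (N - n).toNat = 2 * N by omega] at this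
    rw [eq_div_iff (mul_ne_zero (hn _) (hn _)), this]
  have hfs : ∀ N, ∑' n, f N n = (∏ k ∈ Finset.range N, (1 - u * y ^ k)) *
      ∏ k ∈ Finset.range N, (1 - u⁻¹ * y ^ (k + 1)) := by
    intro N
    rw [tg_finite_jtp y u hy0 hu, tsum_eq_sum (s := Finset.Icc (-(N : ℤ)) N)]
    · symm
      refine Finset.sum_bij (fun j _ => (j : ℤ) - N) ?_ ?_ ?_ ?_
      · intro j hj; simp only [Finset.mem_range, Finset.mem_Icc] at *; omega
      · intro a _ c _ h; omega
      · intro n hn; simp only [Finset.mem_Icc] at hn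
        exact ⟨(n + N).toNat, by simp only [Finset.mem_range]; omega, by omega⟩
      · intro j hj
        have : (j : ℤ) - N ∈ Finset.Icc (-(N : ℤ)) N := by
          simp only [Finset.mem_range, Finset.mem_Icc] at *; omega
        simp only [hf, this, if_true, ht]
        simp
    · intro n hn'
      simp only [hf, hn', if_false]
  have hlim : Tendsto (fun N => ∑' n, f N n) atTop (𝓝 (∑' n, P⁻¹ * t n)) := by
    refine tendsto_tsum_of_dominated_convergence (bound := fun n => B / (b * b) * ‖t n‖)
      (hs.norm.mul_left _) ?_ ?_
    · intro n
      have h1 : Tendsto (fun N : ℕ => tgPoch y (2 * N) / (tgPoch y (n + N).toNat * tgPoch y (N - n).toNat) * t n) atTop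
          (𝓝 (P / (P * P) * t n)) := by
        refine Tendsto.mul_const _ (Tendsto.div ?_ (Tendsto.mul ?_ ?_) (mul_ne_zero hP0 hP0))
        · exact hPt.comp (tendsto_atTop_mono (fun N => by simp only [id]; omega) tendsto_id)
        · refine hPt.comp (tendsto_atTop.2 fun M => ?_)
          filter_upwards [eventually_ge_atTop (M + n.natAbs)] with N hN
          omega
        · refine hPt.comp (tendsto_atTop.2 fun M => ?_)
          filter_upwards [eventually_ge_atTop (M + n.natAbs)] with N hN
          omega
      have h2 : P / (P * P) = P⁻¹ := by field_simp
      rw [h2] at h1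
      refine h1.congr' ?_
      filter_upwards [eventually_ge_atTop n.natAbs] with N hN
      have : n ∈ Finset.Icc (-(N : ℤ)) N := by simp only [Finset.mem_Icc]; omega
      simp only [hf, this, if_true, hgb N n this]
    · refine Eventually.of_forall fun N n => ?_
      by_cases h : n ∈ Finset.Icc (-(N : ℤ)) N
      · simp only [hf, h, if_true, hgb N n h, norm_mul, norm_div]
        have hB0 : 0 ≤ B := (norm_nonneg _).trans (hBb 0).1
        gcongr
        · exact (hBb _).1
        · exact (hBb _).2
        · exact (hBb _).2
      · simp only [hf, h, if_false, norm_zero]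
        have hB0 : 0 ≤ B := (norm_nonneg _).trans (hBb 0).1
        positivity
  have hg : Summable fun k : ℕ => ‖y‖ ^ k := summable_geometric_of_lt_one (norm_nonneg _) hy
  have hp1 : Tendsto (fun N => ∏ k ∈ Finset.range N, (1 - u * y ^ k)) atTop (𝓝 (∏' k : ℕ, (1 - u * y ^ k))) := by
    have : Summable fun k : ℕ => ‖-(u * y ^ k)‖ := by
      simp only [norm_neg, norm_mul, norm_pow]; exact hg.mul_left _
    simpa only [← sub_eq_add_neg] using (multipliable_one_add_of_summable this).hasProd.tendsto_prod_nat
  have hp2 : Tendsto (fun N => ∏ k ∈ Finset.range N, (1 - u⁻¹ * y ^ (k + 1))) atTop (𝓝 (∏' k : ℕ, (1 - u⁻¹ * y ^ (k + 1)))) := by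
    have : Summable fun k : ℕ => ‖-(u⁻¹ * y ^ (k + 1))‖ := by
      simp only [norm_neg, norm_mul, norm_pow]; exact ((summable_nat_add_iff 1).2 hg).mul_left _
    simpa only [← sub_eq_add_neg] using (multipliable_one_add_of_summable this).hasProd.tendsto_prod_nat
  have := tendsto_nhds_unique (hlim.congr hfs) (hp1.mul hp2)
  rw [← this, tsum_mul_left]
  field_simp


/-- The sector in which the main asymptotics are taken. -/
def tgSec : Set ℂ := {s : ℂ | 0 < s.re ∧ |s.im| ≤ s.re}

noncomputable def tgTh (a β : ℝ) (s : ℂ) : ℂ :=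
  (∏' k : ℕ, (1 - cexp (2 * Real.pi * I * β - a * s) * cexp (-s) ^ k)) *
  (∏' k : ℕ, (1 - (cexp (2 * Real.pi * I * β - a * s))⁻¹ * cexp (-s) ^ (k + 1))) *
  (∏' k : ℕ, (1 - cexp (-s) ^ (k + 1)))

noncomputable def tgTerm (a b : ℝ) (s : ℂ) (n : ℤ) : ℂ :=
  cexp (-(2 * Real.pi ^ 2 * ((b : ℂ) - n) ^ 2 / s) - 2 * Real.pi * I * (a - 1 / 2) * (b - n))

lemma tgTh_eq (a β : ℝ) (s : ℂ) (hs : 0 < s.re) :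
    tgTh a β s = 1 / (s / (2 * Real.pi)) ^ (1 / 2 : ℂ) * cexp (s * (a - 1 / 2) ^ 2 / 2) *
      ∑' n : ℤ, tgTerm a (1 / 2 + β) s n := by
  have hs0 : s ≠ 0 := by rintro rfl; simp at hs
  have hpi : (Real.pi : ℂ) ≠ 0 := by exact_mod_cast Real.pi_ne_zero
  set z : ℂ := 1 / 2 + β + I * s * (a - 1 / 2) / (2 * Real.pi) with hz
  set τ : ℂ := I * s / (2 * Real.pi) with hτ
  have hterm : ∀ n : ℤ, (-1 : ℂ) ^ n * cexp (-s) ^ (n * (n - 1) / 2) *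
      cexp (2 * Real.pi * I * β - a * s) ^ n = jacobiTheta₂_term n z τ := by
    intro n
    have h1 : (-1 : ℂ) = cexp (Real.pi * I) := by rw [Complex.exp_pi_mul_I]
    rw [h1, ← Complex.exp_int_mul, ← Complex.exp_int_mul, ← Complex.exp_int_mul,
      ← Complex.exp_add, ← Complex.exp_add, jacobiTheta₂_term]
    congr 1
    have h2 : ((n * (n - 1) / 2 : ℤ) : ℂ) = n * (n - 1) / 2 := by
      have : ((n * (n - 1) / 2 : ℤ) : ℂ) * 2 = n * (n - 1) := by
        have := Int.ediv_mul_cancel (Int.even_mul_pred_self n).two_dvd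
        exact_mod_cast this
      rw [← this]; ring
    rw [h2, hz, hτ]
    field_simp
    ring_nf
    simp only [I_sq]
    ring
  have him : 0 < τ.im := by
    rw [hτ, show I * s / (2 * Real.pi) = ((1 / (2 * Real.pi) : ℝ) : ℂ) * (I * s) by push_cast; ring]
    rw [im_ofReal_mul]
    simp only [mul_im, I_re, I_im]
    have := Real.pi_pos
    have h2 : 0 < 1 / (2 * Real.pi) := by positivity
    nlinarith [mul_pos h2 hs]
  have hsum : Summable fun n : ℤ => (-1 : ℂ) ^ n * cexp (-s) ^ (n * (n - 1) / 2) *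
      cexp (2 * Real.pi * I * β - a * s) ^ n := by
    simp only [hterm]
    exact (summable_jacobiTheta₂_term_iff z τ).2 him
  have hy : ‖cexp (-s)‖ < 1 := by
    rw [Complex.norm_exp]; simpa using hs
  rw [tgTh, tg_jtp _ _ (Complex.exp_ne_zero _) hy (Complex.exp_ne_zero _) hsum]
  simp only [hterm]
  have hre : 0 < (s / (2 * Real.pi)).re := by
    rw [show s / (2 * Real.pi) = ((1 / (2 * Real.pi) : ℝ) : ℂ) * s by push_cast; ring, re_ofReal_mul]
    have := Real.pi_pos
    positivity
  have key := Complex.tsum_exp_neg_quadratic hre (I * z)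
  have e1 : ∀ n : ℤ, jacobiTheta₂_term n z τ =
      cexp (-Real.pi * (s / (2 * Real.pi)) * (n : ℂ) ^ 2 + 2 * Real.pi * (I * z) * n) := by
    intro n
    rw [jacobiTheta₂_term, hτ]
    congr 1
    linear_combination (n : ℂ) ^ 2 * s / 2 * (Real.pi * (Real.pi : ℂ)⁻¹) * I_sq
  simp only [e1]
  rw [key, mul_assoc, ← tsum_mul_left (a := cexp _)]
  refine congrArg _ (tsum_congr fun n => ?_)
  rw [tgTerm, ← Complex.exp_add]
  congr 1
  rw [hz]
  push_cast
  field_simp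
  ring_nf
  have i5 : I ^ 5 = I := by rw [show (5 : ℕ) = 4 + 1 by rfl, pow_succ, I_pow_four, one_mul]
  have i6 : I ^ 6 = -1 := by rw [show (6 : ℕ) = 4 + 2 by rfl, pow_add, I_pow_four, one_mul, I_sq]
  simp only [I_sq, I_pow_four, I_pow_three, i5, i6]
  ring

lemma tg_inv_re (s : ℂ) (hs : s ∈ tgSec) : 1 / (2 * s.re) ≤ (1 / s).re := by
  obtain ⟨h1, h2⟩ := hs
  rw [one_div s, inv_re, normSq_apply, div_le_div_iff₀ (by positivity) (by nlinarith [mul_self_nonneg s.im])]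
  have : s.im * s.im ≤ s.re * s.re := by
    rw [← abs_mul_abs_self s.im]; exact mul_self_le_mul_self (abs_nonneg _) h2
  nlinarith

lemma tg_inv_tendsto : Tendsto (fun s : ℂ => (1 / s).re) (𝓝[tgSec] 0) atTop := by
  have h : Tendsto (fun s : ℂ => 1 / (2 * s.re)) (𝓝[tgSec] 0) atTop := by
    have h0 : Tendsto (fun s : ℂ => 2 * s.re) (𝓝[tgSec] 0) (𝓝[>] 0) := by
      refine tendsto_nhdsWithin_iff.2 ⟨?_, ?_⟩
      · have : Continuous fun s : ℂ => 2 * s.re := by fun_prop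
        simpa using (this.tendsto 0).mono_left nhdsWithin_le_nhds
      · filter_upwards [self_mem_nhdsWithin] with s hs
        have := hs.1
        simp only [Set.mem_Ioi]; positivity
    simpa only [one_div, Function.comp_def] using tendsto_inv_nhdsGT_zero.comp h0
  refine tendsto_atTop_mono' _ ?_ h
  filter_upwards [self_mem_nhdsWithin] with s hs using tg_inv_re s hs

lemma tgTh_tendsto (a β d : ℝ) (hd : ∀ n : ℤ, d ^ 2 ≤ (1 / 2 + β - n) ^ 2) :
    Tendsto (fun s => tgTh a β s * (s / (2 * Real.pi)) ^ (1 / 2 : ℂ) * cexp (2 * Real.pi ^ 2 * d ^ 2 / s))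
      (𝓝[tgSec] 0)
      (𝓝 (∑' n : ℤ, if (1 / 2 + β - n) ^ 2 = d ^ 2 then
        cexp (- 2 * Real.pi * I * (a - 1 / 2) * ((1 / 2 + β : ℝ) - n)) else 0)) := by
  set b : ℝ := 1 / 2 + β with hb
  have hpi := Real.pi_pos
  have hpi0 : (Real.pi : ℂ) ≠ 0 := by exact_mod_cast Real.pi_ne_zero
  have hnorm : ∀ (s : ℂ) (n : ℤ), ‖cexp (2 * Real.pi ^ 2 * d ^ 2 / s) * tgTerm a b s n‖ =
      Real.exp (-(2 * Real.pi ^ 2 * ((b - n) ^ 2 - d ^ 2) * (1 / s).re)) := by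
    intro s n
    rw [tgTerm, ← Complex.exp_add, Complex.norm_exp]
    congr 1
    have : (2 * Real.pi ^ 2 * d ^ 2 / s + (-(2 * Real.pi ^ 2 * ((b : ℂ) - n) ^ 2 / s) - 2 * Real.pi * I * (a - 1 / 2) * (b - n)) : ℂ)
      = ((-(2 * Real.pi ^ 2 * ((b - n) ^ 2 - d ^ 2)) : ℝ) : ℂ) * (1 / s) + ((- 2 * Real.pi * (a - 1 / 2) * (b - n) : ℝ) : ℂ) * I := by
      push_cast; ring
    rw [this, add_re, re_ofReal_mul, re_ofReal_mul]
    simp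
  have hlim : Tendsto (fun s => ∑' n : ℤ, cexp (2 * Real.pi ^ 2 * d ^ 2 / s) * tgTerm a b s n) (𝓝[tgSec] 0)
      (𝓝 (∑' n : ℤ, if (b - n) ^ 2 = d ^ 2 then
        cexp (- 2 * Real.pi * I * (a - 1 / 2) * ((b : ℝ) - n)) else 0)) := by
    refine tendsto_tsum_of_dominated_convergence
      (bound := fun n : ℤ => Real.exp (-(2 * Real.pi ^ 2 * ((b - n) ^ 2 - d ^ 2)))) ?_ ?_ ?_
    · have h1 := ((summable_jacobiTheta₂_term_iff (-(2 * Real.pi * b : ℝ) * I) ((2 * Real.pi : ℝ) * I)).2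
        (by simp [hpi])).norm
      have h2 := h1.mul_left (Real.exp (2 * Real.pi ^ 2 * (d ^ 2 - b ^ 2)))
      refine h2.congr fun n => ?_
      rw [norm_jacobiTheta₂_term, ← Real.exp_add]
      congr 1
      simp
      ring
    · intro n
      by_cases h : (b - n) ^ 2 = d ^ 2
      · simp only [h, if_true]
        refine tendsto_const_nhds.congr fun s => ?_
        rw [tgTerm, ← Complex.exp_add]
        congr 1
        have : ((b : ℂ) - n) ^ 2 = d ^ 2 := by exact_mod_cast h
        rw [this]; ring
      · simp only [h, if_false]
        rw [tendsto_zero_iff_norm_tendsto_zero]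
        simp only [hnorm]
        have hlt : 0 < 2 * Real.pi ^ 2 * ((b - n) ^ 2 - d ^ 2) := by
          have := lt_of_le_of_ne (hd n) (Ne.symm h)
          have : 0 < (b - n) ^ 2 - d ^ 2 := by linarith
          positivity
        exact Real.tendsto_exp_neg_atTop_nhds_zero.comp (tg_inv_tendsto.const_mul_atTop hlt)
    · filter_upwards [tg_inv_tendsto.eventually_ge_atTop 1] with s hs n
      rw [hnorm]
      apply Real.exp_le_exp.2
      have : 0 ≤ (b - n) ^ 2 - d ^ 2 := by linarith [hd n]
      have h3 : 0 ≤ 2 * Real.pi ^ 2 * ((b - n) ^ 2 - d ^ 2) := by positivity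
      nlinarith
  have hexp : Tendsto (fun s : ℂ => cexp (s * (a - 1 / 2) ^ 2 / 2)) (𝓝[tgSec] 0) (𝓝 1) := by
    have : Continuous fun s : ℂ => cexp (s * (a - 1 / 2) ^ 2 / 2) := by fun_prop
    simpa using (this.tendsto 0).mono_left nhdsWithin_le_nhds
  have := hexp.mul hlim
  rw [one_mul] at this
  refine this.congr' ?_
  filter_upwards [self_mem_nhdsWithin] with s hs
  have hs0 : s ≠ 0 := by rintro rfl; exact absurd hs.1 (by simp)
  rw [tgTh_eq a β s hs.1, tsum_mul_left, ← hb]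
  have : (s / (2 * Real.pi)) ^ (1 / 2 : ℂ) ≠ 0 := by
    rw [Ne, Complex.cpow_eq_zero_iff]
    simp [hs0, hpi.ne']
  field_simp


noncomputable def tgQ (q : ℂ) (a : ℕ) : ℂ := ∏' k : ℕ, (1 - q ^ (10 * k + a))

noncomputable def tgF (q : ℂ) : ℂ :=
  (∏' k : ℕ, (1 - q ^ (10 * k + 2)) * (1 - q ^ (10 * k + 8))) *
        (∏' k : ℕ, (1 - q ^ (10 * k + 4)) * (1 - q ^ (10 * k + 6))) ^ 2 *
        (∏' k : ℕ, (1 - q ^ (5 * k + 2)) * (1 - q ^ (5 * k + 3))) ^ (-2 : ℤ)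

lemma tg_sum_pow (q : ℂ) (hq : ‖q‖ < 1) (m a : ℕ) (hm : 0 < m) :
    Summable fun k : ℕ => ‖-q ^ (m * k + a)‖ := by
  simp only [norm_neg, pow_add, pow_mul, norm_mul, norm_pow]
  exact (summable_geometric_of_lt_one (by positivity) (pow_lt_one₀ (norm_nonneg _) hq hm.ne')).mul_right _

lemma tg_mult (q : ℂ) (hq : ‖q‖ < 1) (m a : ℕ) (hm : 0 < m) :
    Multipliable fun k : ℕ => (1 - q ^ (m * k + a)) := by
  simpa only [← sub_eq_add_neg] using multipliable_one_add_of_summable (tg_sum_pow q hq m a hm)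

lemma tgQ_ne (q : ℂ) (hq : ‖q‖ < 1) (a : ℕ) (ha : 0 < a) : tgQ q a ≠ 0 := by
  have := tprod_one_add_ne_zero_of_summable (f := fun k : ℕ => -q ^ (10 * k + a)) ?_ (tg_sum_pow q hq 10 a (by norm_num))
  · simpa only [← sub_eq_add_neg, tgQ] using this
  intro k h
  have : q ^ (10 * k + a) = 1 := by linear_combination -h
  have h2 := congrArg norm this
  rw [norm_pow, norm_one] at h2
  exact absurd h2 (pow_lt_one₀ (norm_nonneg _) hq (by omega)).ne

lemma tgF_eq (q : ℂ) (hq : ‖q‖ < 1) : tgF q =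
    (tgQ q 4 * tgQ q 6) ^ 2 / (tgQ q 2 * tgQ q 8 * (tgQ q 3 * tgQ q 7) ^ 2) := by
  have M : ∀ a, Multipliable fun k : ℕ => (1 - q ^ (10 * k + a)) := fun a => tg_mult q hq 10 a (by norm_num)
  have hD : (∏' k : ℕ, (1 - q ^ (5 * k + 2)) * (1 - q ^ (5 * k + 3))) =
      tgQ q 2 * tgQ q 8 * (tgQ q 3 * tgQ q 7) := by
    have e1 : ∀ k : ℕ, (1 - q ^ (5 * (2 * k) + 2)) * (1 - q ^ (5 * (2 * k) + 3)) =
      (1 - q ^ (10 * k + 2)) * (1 - q ^ (10 * k + 3)) := fun k => by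
        rw [show 5 * (2 * k) = 10 * k by ring]
    have e2 : ∀ k : ℕ, (1 - q ^ (5 * (2 * k + 1) + 2)) * (1 - q ^ (5 * (2 * k + 1) + 3)) =
      (1 - q ^ (10 * k + 7)) * (1 - q ^ (10 * k + 8)) := fun k => by
        rw [show 5 * (2 * k + 1) + 2 = 10 * k + 7 by ring, show 5 * (2 * k + 1) + 3 = 10 * k + 8 by ring]
    rw [← tprod_even_mul_odd (f := fun k : ℕ => (1 - q ^ (5 * k + 2)) * (1 - q ^ (5 * k + 3)))]
    · simp only [e1, e2]
      rw [(M 2).tprod_mul (M 3), (M 7).tprod_mul (M 8)]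
      simp only [tgQ]; ring
    · simp only [e1]; exact (M 2).mul (M 3)
    · simp only [e2]; exact (M 7).mul (M 8)
  rw [tgF, hD, (M 2).tprod_mul (M 8), (M 4).tprod_mul (M 6)]
  change tgQ q 2 * tgQ q 8 * (tgQ q 4 * tgQ q 6) ^ 2 * _ = _
  have h := fun a ha => tgQ_ne q hq a ha
  have h2 := h 2 (by norm_num)
  have h3 := h 3 (by norm_num)
  have h7 := h 7 (by norm_num)
  have h8 := h 8 (by norm_num)
  rw [zpow_neg]
  norm_cast
  field_simp

lemma tg_norm_lt (t : ℝ) (s : ℂ) (hs : 0 < s.re) : ‖cexp (t * I - s)‖ < 1 := by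
  rw [Complex.norm_exp]; simpa using hs

noncomputable def tgE (s : ℂ) : ℂ := ∏' k : ℕ, (1 - cexp (-(10 * s)) ^ (k + 1))

lemma tgTh_eq_Q (j : ℤ) (a : ℕ) (ha : a ≤ 10) (s : ℂ) (t : ℝ) (ht : t = 2 * Real.pi * j / 10) :
    tgTh (a / 10) (a * j / 10) (10 * s) =
      tgQ (cexp (t * I - s)) a * tgQ (cexp (t * I - s)) (10 - a) * tgE s := by
  have h10 : cexp (-(10 * s)) = cexp (t * I - s) ^ 10 := by
    rw [← Complex.exp_nat_mul, ht, Complex.exp_eq_exp_iff_exists_int]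
    refine ⟨-j, ?_⟩
    push_cast; ring
  have hu : cexp (2 * Real.pi * I * ((a * j / 10 : ℝ) : ℂ) - ((a / 10 : ℝ) : ℂ) * (10 * s)) = cexp (t * I - s) ^ a := by
    rw [← Complex.exp_nat_mul, ht]; congr 1; push_cast; ring
  rw [tgTh, tgE, hu, h10]
  set q := cexp (t * I - s)
  have hq0 : q ≠ 0 := Complex.exp_ne_zero _
  congr 1
  congr 1
  · refine tprod_congr fun k => ?_
    rw [← pow_mul, ← pow_add, add_comm]
  · refine tprod_congr fun k => ?_
    rw [← pow_mul]
    congr 1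
    rw [inv_mul_eq_iff_eq_mul₀ (pow_ne_zero _ hq0), ← pow_add]
    congr 1
    omega

lemma tgE_eq (s : ℂ) (hs : 0 < s.re) : tgE s = tgTh (1 / 3) 0 (30 * s) := by
  have hu : cexp (2 * Real.pi * I * ((0 : ℝ) : ℂ) - ((1 / 3 : ℝ) : ℂ) * (30 * s)) = cexp (-(10 * s)) := by
    congr 1; push_cast; ring
  have h3 : cexp (-(30 * s)) = cexp (-(10 * s)) ^ 3 := by
    rw [← Complex.exp_nat_mul]; congr 1; push_cast; ring
  have hy : ‖cexp (-(10 * s))‖ < 1 := by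
    rw [Complex.norm_exp]; simpa using hs
  rw [tgTh, tgE, hu, h3]
  set y := cexp (-(10 * s))
  have hy0 : y ≠ 0 := Complex.exp_ne_zero _
  have e1 : ∀ k : ℕ, 1 - y * (y ^ 3) ^ k = 1 - y ^ (3 * k + 1) := fun k => by ring
  have e2 : ∀ k : ℕ, 1 - y⁻¹ * (y ^ 3) ^ (k + 1) = 1 - y ^ (3 * k + 2) := fun k => by
    field_simp; ring
  have e3 : ∀ k : ℕ, 1 - (y ^ 3) ^ (k + 1) = 1 - y ^ (3 * k + 3) := fun k => by ring
  simp only [e1, e2, e3]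
  have l0 := (tg_mult y hy 1 1 one_pos).hasProd.tendsto_prod_nat
  have l1 := (tg_mult y hy 3 1 (by norm_num)).hasProd.tendsto_prod_nat
  have l2 := (tg_mult y hy 3 2 (by norm_num)).hasProd.tendsto_prod_nat
  have l3 := (tg_mult y hy 3 3 (by norm_num)).hasProd.tendsto_prod_nat
  simp only [one_mul] at l0
  have l4 := l0.comp (tendsto_atTop_mono (fun N : ℕ => by simp only [id]; omega) tendsto_id : Tendsto (fun N : ℕ => 3 * N) atTop atTop)
  refine tendsto_nhds_unique l4 (((l1.mul l2).mul l3).congr fun N => ?_)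
  simp only [Function.comp]
  induction N with
  | zero => simp
  | succ N ih =>
    rw [Finset.prod_range_succ, Finset.prod_range_succ, Finset.prod_range_succ,
      show 3 * (N + 1) = 3 * N + 1 + 1 + 1 by ring, Finset.prod_range_succ, Finset.prod_range_succ, Finset.prod_range_succ, ← ih]
    ring

lemma tgE_ne (s : ℂ) (hs : 0 < s.re) : tgE s ≠ 0 := by
  have hy : ‖cexp (-(10 * s))‖ < 1 := by
    rw [Complex.norm_exp]; simpa using hs
  obtain ⟨P, hP, hP', -⟩ := tg_poch_bounds _ hy
  rw [tgE, ← hP']; exact hP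

lemma tg_scale (c : ℝ) (hc : 0 < c) : Tendsto (fun s : ℂ => (c : ℂ) * s) (𝓝[tgSec] 0) (𝓝[tgSec] 0) := by
  refine tendsto_nhdsWithin_iff.2 ⟨?_, ?_⟩
  · have : Continuous fun s : ℂ => (c : ℂ) * s := by fun_prop
    simpa using (this.tendsto 0).mono_left nhdsWithin_le_nhds
  · filter_upwards [self_mem_nhdsWithin] with s hs
    refine ⟨?_, ?_⟩
    · rw [re_ofReal_mul]; exact mul_pos hc hs.1
    · rw [re_ofReal_mul, im_ofReal_mul, abs_mul, abs_of_pos hc]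
      exact mul_le_mul_of_nonneg_left hs.2 hc.le

lemma tgE_tendsto : Tendsto (fun s => tgE s * ((30 * s) / (2 * Real.pi)) ^ (1 / 2 : ℂ) *
    cexp (Real.pi ^ 2 / (60 * s))) (𝓝[tgSec] 0) (𝓝 ((Real.sqrt 3 : ℝ) : ℂ)) := by
  have h := (tgTh_tendsto (1 / 3) 0 (1 / 2) (fun n => ?_)).comp (tg_scale 30 (by norm_num))
  · have hv : (∑' n : ℤ, if (1 / 2 + (0 : ℝ) - n) ^ 2 = (1 / 2) ^ 2 then
        cexp (- 2 * Real.pi * I * (((1 / 3 : ℝ) : ℂ) - 1 / 2) * ((1 / 2 + 0 : ℝ) - n)) else 0) = ((Real.sqrt 3 : ℝ) : ℂ) := by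
      rw [tsum_eq_sum (s := {0, 1})]
      · rw [Finset.sum_pair (by norm_num)]
        rw [if_pos (by norm_num), if_pos (by norm_num)]
        have : Real.sqrt 3 = 2 * Real.cos (Real.pi / 6) := by rw [Real.cos_pi_div_six]; ring
        rw [this, ofReal_mul, Complex.ofReal_cos, Complex.ofReal_ofNat, two_cos]
        congr 1 <;> congr 1 <;> push_cast <;> ring
      · intro n hn
        rw [if_neg]
        intro h
        have h2 : (n : ℝ) * (n - 1) = 0 := by linear_combination h
        have h3 : n * (n - 1) = 0 := by exact_mod_cast h2
        rcases mul_eq_zero.1 h3 with h | h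
        · simp [h] at hn
        · have : n = 1 := by omega
          simp [this] at hn
    rw [hv] at h
    refine h.congr' ?_
    filter_upwards [self_mem_nhdsWithin] with s hs
    have hs0 : s ≠ 0 := by rintro rfl; exact absurd hs.1 (by simp)
    simp only [Function.comp]
    rw [tgE_eq s hs.1]
    push_cast
    congr 2
    field_simp
    norm_num
  · have : (0 : ℝ) ≤ (n : ℝ) * (n - 1) := by
      have : 0 ≤ n * (n - 1) := by
        rcases le_or_gt n 0 with h | h
        · nlinarith
        · nlinarith
      exact_mod_cast this
    nlinarith

lemma tg_main (j : ℤ) (t : ℝ) (ht : t = 2 * Real.pi * j / 10) (d : ℕ → ℝ) (κ : ℕ → ℂ)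
    (hd : ∀ a ∈ ({2, 3, 4} : Finset ℕ), ∀ n : ℤ, (d a) ^ 2 ≤ (1 / 2 + (a * j / 10 : ℝ) - n) ^ 2)
    (hκ : ∀ a ∈ ({2, 3, 4} : Finset ℕ), (∑' n : ℤ, if (1 / 2 + (a * j / 10 : ℝ) - n) ^ 2 = (d a) ^ 2 then
        cexp (- 2 * Real.pi * I * (((a / 10 : ℝ) : ℂ) - 1 / 2) * ((1 / 2 + (a * j / 10 : ℝ) : ℝ) - n)) else 0) = κ a)
    (hs : d 2 ^ 2 + 2 * d 3 ^ 2 - 2 * d 4 ^ 2 = 1 / 4) (h2 : κ 2 ≠ 0) (h3 : κ 3 ≠ 0) :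
    Tendsto (fun s => tgF (cexp (t * I - s)) * cexp (-(Real.pi ^ 2 / 30 / s))) (𝓝[tgSec] 0)
      (𝓝 (κ 4 ^ 2 / (κ 2 * κ 3 ^ 2))) := by
  have H : ∀ a ∈ ({2, 3, 4} : Finset ℕ), Tendsto (fun s => tgTh (a / 10) (a * j / 10) (10 * s) *
      ((10 * s) / (2 * Real.pi)) ^ (1 / 2 : ℂ) * cexp (Real.pi ^ 2 * d a ^ 2 / (5 * s))) (𝓝[tgSec] 0) (𝓝 (κ a)) := by
    intro a ha
    have h := (tgTh_tendsto (a / 10) (a * j / 10) (d a) (hd a ha)).comp (tg_scale 10 (by norm_num))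
    rw [hκ a ha] at h
    refine h.congr' ?_
    filter_upwards [self_mem_nhdsWithin] with s hs
    have hs0 : s ≠ 0 := by rintro rfl; exact absurd hs.1 (by simp)
    simp only [Function.comp]
    push_cast
    congr 2
    field_simp
    ring
  have h2' := H 2 (by simp)
  have h3' := H 3 (by simp)
  have h4' := H 4 (by simp)
  have hsq : ((Real.sqrt 3 : ℝ) : ℂ) ≠ 0 := by
    rw [Ne, ofReal_eq_zero, Real.sqrt_eq_zero (by norm_num)]; norm_num
  have hlim := (((h4'.pow 2).mul tgE_tendsto).div (h2'.mul (h3'.pow 2)) (mul_ne_zero h2 (pow_ne_zero 2 h3))).div_const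
    ((Real.sqrt 3 : ℝ) : ℂ)
  have e : κ 4 ^ 2 * ((Real.sqrt 3 : ℝ) : ℂ) / (κ 2 * κ 3 ^ 2) / ((Real.sqrt 3 : ℝ) : ℂ) = κ 4 ^ 2 / (κ 2 * κ 3 ^ 2) := by
    field_simp
  rw [e] at hlim
  refine hlim.congr' ?_
  filter_upwards [self_mem_nhdsWithin] with s hs'
  have hs0 : s ≠ 0 := by rintro rfl; exact absurd hs'.1 (by simp)
  have hpi0 : (Real.pi : ℂ) ≠ 0 := by exact_mod_cast Real.pi_ne_zero
  simp only [Pi.div_apply]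
  rw [tgTh_eq_Q j 2 (by norm_num) s t ht, tgTh_eq_Q j 3 (by norm_num) s t ht, tgTh_eq_Q j 4 (by norm_num) s t ht]
  have hq := tg_norm_lt t s hs'.1
  rw [tgF_eq _ hq]
  set q := cexp (t * I - s)
  have h2n := tgQ_ne q hq 2 (by norm_num)
  have h3n := tgQ_ne q hq 3 (by norm_num)
  have h7n := tgQ_ne q hq 7 (by norm_num)
  have h8n := tgQ_ne q hq 8 (by norm_num)
  have hEn := tgE_ne s hs'.1
  have hc : (30 * s / (2 * Real.pi)) ^ (1 / 2 : ℂ) = ((Real.sqrt 3 : ℝ) : ℂ) * (10 * s / (2 * Real.pi)) ^ (1 / 2 : ℂ) := by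
    have : 30 * s / (2 * Real.pi) = ((3 : ℝ) : ℂ) * (10 * s / (2 * Real.pi)) := by push_cast; ring
    have h12 : (1 / 2 : ℂ) = ((1 / 2 : ℝ) : ℂ) := by push_cast; ring
    have hz0 : 10 * s / (2 * Real.pi) ≠ 0 :=
      div_ne_zero (mul_ne_zero (by norm_num) hs0) (mul_ne_zero (by norm_num) hpi0)
    rw [this, cpow_def_of_ne_zero (mul_ne_zero (by norm_num) hz0), log_ofReal_mul (by norm_num) hz0, add_mul,
      Complex.exp_add, ← cpow_def_of_ne_zero hz0, ofReal_log (by norm_num), ← cpow_def_of_ne_zero (by norm_num), h12, ← ofReal_cpow (by norm_num), Real.sqrt_eq_rpow]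
  have hcn : (10 * s / (2 * Real.pi)) ^ (1 / 2 : ℂ) ≠ 0 := by
    rw [Ne, Complex.cpow_eq_zero_iff]
    simp [hs0, Real.pi_pos.ne']
  rw [hc]
  norm_num only [Nat.reduceSub]
  have he : cexp (-(Real.pi ^ 2 / 30 / s)) = cexp (Real.pi ^ 2 * d 4 ^ 2 / (5 * s)) ^ 2 * cexp (Real.pi ^ 2 / (60 * s)) /
     (cexp (Real.pi ^ 2 * d 2 ^ 2 / (5 * s)) * cexp (Real.pi ^ 2 * d 3 ^ 2 / (5 * s)) ^ 2) := by
    rw [← Complex.exp_nat_mul, ← Complex.exp_nat_mul, ← Complex.exp_add, ← Complex.exp_add, ← Complex.exp_sub]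
    congr 1
    have hsC : (d 2 : ℂ) ^ 2 + 2 * d 3 ^ 2 - 2 * d 4 ^ 2 = 1 / 4 := by have := congrArg (fun x : ℝ => (x : ℂ)) hs; push_cast at this; exact this
    push_cast
    field_simp
    linear_combination 1800 * hsC
  rw [he]
  have x1 := Complex.exp_ne_zero (Real.pi ^ 2 * d 2 ^ 2 / (5 * s))
  have x2 := Complex.exp_ne_zero (Real.pi ^ 2 * d 3 ^ 2 / (5 * s))
  generalize cexp (Real.pi ^ 2 * d 2 ^ 2 / (5 * s)) = X1 at *
  generalize cexp (Real.pi ^ 2 * d 3 ^ 2 / (5 * s)) = X2 at *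
  generalize cexp (Real.pi ^ 2 * d 4 ^ 2 / (5 * s)) = X3 at *
  generalize (10 * s / (2 * Real.pi)) ^ (1 / 2 : ℂ) = R at *
  field_simp


lemma tg_near (e : ℝ) (he : |e| < 1 / 2) (m : ℤ) (hm : m ≠ 0) : e ^ 2 < (e + m) ^ 2 := by
  rw [abs_lt] at he
  rcases lt_or_gt_of_ne hm with h | h
  · have : (m : ℝ) ≤ -1 := by exact_mod_cast (by omega : m ≤ -1)
    nlinarith
  · have : (1 : ℝ) ≤ m := by exact_mod_cast (by omega : 1 ≤ m)
    nlinarith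

lemma tg_single (b e : ℝ) (he : |e| < 1 / 2) (n₀ : ℤ) (hb : b = n₀ + e) :
    (∀ n : ℤ, e ^ 2 ≤ (b - n) ^ 2) ∧ ∀ c : ℂ, (∑' n : ℤ, if (b - n) ^ 2 = e ^ 2 then
        cexp (c * ((b : ℝ) - n)) else 0) = cexp (c * e) := by
  have key : ∀ n : ℤ, n ≠ n₀ → e ^ 2 < (b - n) ^ 2 := by
    intro n hn
    have := tg_near e he (n₀ - n) (by omega)
    rw [hb]
    push_cast at this
    convert this using 2
    ring
  have h0 : b - n₀ = e := by rw [hb]; ring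
  refine ⟨fun n => ?_, fun c => ?_⟩
  · by_cases h : n = n₀
    · rw [h, h0]
    · exact (key n h).le
  · rw [tsum_eq_single n₀]
    · rw [h0, if_pos rfl]
      congr 2
      rw [← h0]; push_cast; ring
    · intro n hn
      rw [if_neg (key n hn).ne']

lemma tg_double : (∀ n : ℤ, (1 / 2 : ℝ) ^ 2 ≤ (1 / 2 - n) ^ 2) ∧
    ∀ a : ℝ, (∑' n : ℤ, if (1 / 2 - n : ℝ) ^ 2 = (1 / 2) ^ 2 then
        cexp (- 2 * Real.pi * I * ((a : ℂ) - 1 / 2) * ((1 / 2 : ℝ) - n)) else 0) =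
      ((2 * Real.cos (Real.pi * (a - 1 / 2)) : ℝ) : ℂ) := by
  constructor
  · intro n
    have : (0 : ℝ) ≤ (n : ℝ) * (n - 1) := by
      have : 0 ≤ n * (n - 1) := by
        rcases le_or_gt n 0 with h | h
        · nlinarith
        · nlinarith
      exact_mod_cast this
    nlinarith
  · intro a
    rw [tsum_eq_sum (s := {0, 1})]
    · rw [Finset.sum_pair (by norm_num)]
      rw [if_pos (by norm_num), if_pos (by norm_num)]
      rw [ofReal_mul, Complex.ofReal_cos, Complex.ofReal_ofNat, two_cos, add_comm]
      congr 1 <;> congr 1 <;> push_cast <;> ring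
    · intro n hn
      rw [if_neg]
      intro h
      have h2 : (n : ℝ) * (n - 1) = 0 := by linear_combination h
      have h3 : n * (n - 1) = 0 := by exact_mod_cast h2
      rcases mul_eq_zero.1 h3 with h | h
      · simp [h] at hn
      · have : n = 1 := by omega
        simp [this] at hn

lemma tg_main_zero : Tendsto (fun s => tgF (cexp ((0 : ℝ) * I - s)) * cexp (-(Real.pi ^ 2 / 30 / s))) (𝓝[tgSec] 0)
      (𝓝 ((2 * Real.sin (Real.pi / 5) : ℝ) : ℂ)) := by
  have hp := Real.pi_pos
  have e : ∀ a : ℕ, (1 / 2 + (a : ℝ) * ((0 : ℤ) : ℝ) / 10 : ℝ) = 1 / 2 := fun a => by simp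
  have hc2 : Real.cos (Real.pi * ((2 : ℕ) / 10 - 1 / 2)) = Real.sin (Real.pi / 5) := by
    rw [← Real.cos_pi_div_two_sub, ← Real.cos_neg]; congr 1; push_cast; ring
  have hc3 : Real.cos (Real.pi * ((3 : ℕ) / 10 - 1 / 2)) = Real.cos (Real.pi / 5) := by
    rw [← Real.cos_neg]; congr 1; push_cast; ring
  have hc4 : Real.cos (Real.pi * ((4 : ℕ) / 10 - 1 / 2)) = 2 * Real.sin (Real.pi / 5) * Real.cos (Real.pi / 5) := by
    rw [← Real.sin_two_mul, ← Real.cos_pi_div_two_sub, ← Real.cos_neg]; congr 1; push_cast; ring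
  have hs : 0 < Real.sin (Real.pi / 5) := Real.sin_pos_of_pos_of_lt_pi (by positivity) (by linarith)
  have hcp : 0 < Real.cos (Real.pi / 5) := Real.cos_pos_of_mem_Ioo ⟨by linarith, by linarith⟩
  have h := tg_main 0 0 (by simp) (fun _ => 1 / 2)
    (fun a => ((2 * Real.cos (Real.pi * (a / 10 - 1 / 2)) : ℝ) : ℂ))
    (fun a _ n => by rw [e]; exact tg_double.1 n)
    (fun a _ => by
      rw [← tg_double.2 (a / 10)]
      simp only [e])
    (by norm_num)
    (by simp only [hc2]; norm_cast; positivity)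
    (by simp only [hc3]; norm_cast; positivity)
  convert h using 2
  simp only [hc2, hc3, hc4]
  norm_cast
  field_simp

lemma tg_main_pm (j : ℤ) (σ : ℝ) (hσ : σ = 1 ∨ σ = -1) (hj : (j : ℝ) = σ * 4) :
    Tendsto (fun s => tgF (cexp ((σ * (4 * Real.pi / 5) : ℝ) * I - s)) * cexp (-(Real.pi ^ 2 / 30 / s))) (𝓝[tgSec] 0)
      (𝓝 (cexp (σ * (Real.pi / 10) * I))) := by
  have hσ2 : σ ^ 2 = 1 := by rcases hσ with h | h <;> rw [h] <;> norm_num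
  have hab : ∀ x : ℝ, |σ * x| = |x| := fun x => by rcases hσ with h | h <;> simp [h]
  have hn : ∀ x y : ℝ, (∃ k : ℤ, 1 / 2 + x = k + y) → (∃ k : ℤ, 1 / 2 - x = k - y) →
      ∃ k : ℤ, 1 / 2 + σ * x = k + σ * y := by
    intro x y h1 h2
    rcases hσ with h | h
    · simpa [h] using h1
    · obtain ⟨k, hk⟩ := h2
      exact ⟨k, by rw [h]; linear_combination hk⟩
  obtain ⟨k2, hk2⟩ := hn (8 / 10) (3 / 10) ⟨1, by norm_num⟩ ⟨0, by norm_num⟩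
  obtain ⟨k3, hk3⟩ := hn (12 / 10) (-3 / 10) ⟨2, by norm_num⟩ ⟨-1, by norm_num⟩
  obtain ⟨k4, hk4⟩ := hn (16 / 10) (1 / 10) ⟨2, by norm_num⟩ ⟨-1, by norm_num⟩
  have s2 := tg_single (1 / 2 + ((2 : ℕ) * j / 10 : ℝ)) (σ * (3 / 10)) (by rw [hab, abs_lt]; norm_num) k2
    (by rw [← hk2, hj]; push_cast; ring)
  have s3 := tg_single (1 / 2 + ((3 : ℕ) * j / 10 : ℝ)) (σ * (-3 / 10)) (by rw [hab, abs_lt]; norm_num) k3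
    (by rw [← hk3, hj]; push_cast; ring)
  have s4 := tg_single (1 / 2 + ((4 : ℕ) * j / 10 : ℝ)) (σ * (1 / 10)) (by rw [hab, abs_lt]; norm_num) k4
    (by rw [← hk4, hj]; push_cast; ring)
  set d : ℕ → ℝ := fun a => if a = 2 then σ * (3 / 10) else if a = 3 then σ * (-3 / 10) else σ * (1 / 10) with hd
  have d2 : d 2 = σ * (3 / 10) := by simp [hd]
  have d3 : d 3 = σ * (-3 / 10) := by simp [hd]
  have d4 : d 4 = σ * (1 / 10) := by simp [hd]
  have h := tg_main j (σ * (4 * Real.pi / 5)) (by rw [hj]; ring) d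
    (fun a => cexp (- 2 * Real.pi * I * (((a / 10 : ℝ) : ℂ) - 1 / 2) * (d a : ℝ)))
    (by
      intro a ha n
      simp only [Finset.mem_insert, Finset.mem_singleton] at ha
      rcases ha with rfl | rfl | rfl
      · rw [d2]; exact s2.1 n
      · rw [d3]; exact s3.1 n
      · rw [d4]; exact s4.1 n)
    (by
      intro a ha
      simp only [Finset.mem_insert, Finset.mem_singleton] at ha
      rcases ha with rfl | rfl | rfl
      · rw [d2]; exact s2.2 _
      · rw [d3]; exact s3.2 _
      · rw [d4]; exact s4.2 _)
    (by rw [d2, d3, d4]; linear_combination 1 / 4 * hσ2)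
    (Complex.exp_ne_zero _) (Complex.exp_ne_zero _)
  convert h using 2
  simp only [d2, d3, d4]
  rw [← Complex.exp_nat_mul, ← Complex.exp_nat_mul, ← Complex.exp_add, ← Complex.exp_sub]
  congr 1
  push_cast
  ring


lemma tg_logser_summ (q : ℂ) (hq : ‖q‖ < 1) (a : ℕ) (ha : 0 < a) :
    Summable (fun p : ℕ × ℕ => (q ^ (10 * p.1 + a)) ^ p.2 / (p.2 : ℂ)) := by
  have hr := summable_geometric_of_lt_one (norm_nonneg q) hq
  refine Summable.of_norm_bounded (g := fun p : ℕ × ℕ => ‖q‖ ^ p.1 * ‖q‖ ^ p.2)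
    (hr.mul_of_nonneg hr (fun _ => by positivity) (fun _ => by positivity)) ?_
  rintro ⟨k, m⟩
  rcases Nat.eq_zero_or_pos m with rfl | hm
  · simp
  simp only [norm_div, norm_pow, Complex.norm_natCast]
  rw [← pow_mul, ← pow_add]
  have h1 : (1 : ℝ) ≤ m := by exact_mod_cast hm
  calc ‖q‖ ^ ((10 * k + a) * m) / m ≤ ‖q‖ ^ ((10 * k + a) * m) := div_le_self (by positivity) h1
    _ ≤ ‖q‖ ^ (k + m) := by
        apply pow_le_pow_of_le_one (norm_nonneg _) hq.le
        nlinarith [Nat.zero_le k, Nat.mul_le_mul (Nat.zero_le k) hm, Nat.mul_le_mul_left k hm, Nat.mul_le_mul_right m ha]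

lemma tg_logser (q : ℂ) (hq : ‖q‖ < 1) (a : ℕ) (ha : 0 < a) :
    Summable (fun m : ℕ => (q ^ m) ^ a / ((1 - (q ^ m) ^ 10) * m)) ∧
    tgQ q a = cexp (-∑' m : ℕ, (q ^ m) ^ a / ((1 - (q ^ m) ^ 10) * m)) := by
  have hS := tg_logser_summ q hq a ha
  have h1 : ∀ k : ℕ, ‖q ^ (10 * k + a)‖ < 1 := fun k => by
    rw [norm_pow]; exact pow_lt_one₀ (norm_nonneg _) hq (by omega)
  have hk : ∀ k : ℕ, HasSum (fun m : ℕ => (q ^ (10 * k + a)) ^ m / (m : ℂ)) (-log (1 - q ^ (10 * k + a))) :=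
    fun k => Complex.hasSum_taylorSeries_neg_log (h1 k)
  have hm : ∀ m : ℕ, HasSum (fun k : ℕ => (q ^ (10 * k + a)) ^ m / (m : ℂ)) ((q ^ m) ^ a / ((1 - (q ^ m) ^ 10) * m)) := by
    intro m
    rcases Nat.eq_zero_or_pos m with rfl | hm
    · simp
    have hlt : ‖(q ^ m) ^ 10‖ < 1 := by
      rw [← pow_mul, norm_pow]; exact pow_lt_one₀ (norm_nonneg _) hq (by omega)
    have := (hasSum_geometric_of_norm_lt_one hlt).mul_left ((q ^ m) ^ a / m)
    have e1 : (fun k : ℕ => (q ^ (10 * k + a)) ^ m / (m : ℂ)) = fun k : ℕ => (q ^ m) ^ a / m * ((q ^ m) ^ 10) ^ k := by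
      funext k
      rw [div_mul_eq_mul_div]
      congr 1
      ring
    have e2 : (q ^ m) ^ a / ((1 - (q ^ m) ^ 10) * m) = (q ^ m) ^ a / m * (1 - (q ^ m) ^ 10)⁻¹ := by
      rw [div_eq_mul_inv, mul_inv]; ring
    rw [e1, e2]
    exact this
  have hsw := (hS.tsum_comm (f := fun k m : ℕ => (q ^ (10 * k + a)) ^ m / (m : ℂ)))
  have hS2 : Summable fun k => -log (1 - q ^ (10 * k + a)) := by
    have := hS.prod
    simpa only [(hk _).tsum_eq] using this
  have hS3 : Summable (fun m : ℕ => (q ^ m) ^ a / ((1 - (q ^ m) ^ 10) * m)) := by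
    have := hS.prod_symm.prod
    simpa only [Prod.swap, (hm _).tsum_eq] using this
  refine ⟨hS3, ?_⟩
  simp only [(hk _).tsum_eq, (hm _).tsum_eq] at hsw
  rw [hsw, ← tsum_neg]
  simp only [neg_neg]
  have hp := (hS2.neg).hasSum.cexp.tprod_eq
  simp only [neg_neg] at hp
  rw [← hp, tgQ]
  congr 1
  ext k
  simp only [Function.comp]
  rw [Complex.exp_log]
  intro h0
  have h2 := h1 k
  rw [show q ^ (10 * k + a) = 1 by linear_combination -h0] at h2
  simp at h2

noncomputable def tgN (x : ℂ) : ℂ := x ^ 2 + x ^ 8 + 2 * x ^ 3 + 2 * x ^ 7 - 2 * x ^ 4 - 2 * x ^ 6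

lemma tgF_exp (q : ℂ) (hq : ‖q‖ < 1) :
    tgF q = cexp (∑' m : ℕ, tgN (q ^ m) / ((1 - (q ^ m) ^ 10) * m)) := by
  have h := fun a ha => tg_logser q hq a ha
  have h2 := h 2 (by norm_num)
  have h3 := h 3 (by norm_num)
  have h4 := h 4 (by norm_num)
  have h6 := h 6 (by norm_num)
  have h7 := h 7 (by norm_num)
  have h8 := h 8 (by norm_num)
  have hs := ((((h2.1.hasSum.add h8.1.hasSum).add (h3.1.hasSum.mul_left 2)).add (h7.1.hasSum.mul_left 2)).sub
    (h4.1.hasSum.mul_left 2)).sub (h6.1.hasSum.mul_left 2)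
  have e := Eq.trans (tsum_congr (f := fun m : ℕ => tgN (q ^ m) / ((1 - (q ^ m) ^ 10) * m))
    fun m => by rw [tgN]; ring) hs.tsum_eq
  rw [e, tgF_eq q hq, h2.2, h3.2, h4.2, h6.2, h7.2, h8.2]
  simp only [← Complex.exp_add, ← Complex.exp_nat_mul, ← Complex.exp_sub]
  congr 1
  push_cast
  ring


lemma tgN_norm (x : ℂ) (hx : ‖x‖ ≤ 1) : ‖tgN x‖ ≤ 10 * ‖x‖ ^ 2 := by
  have h : ∀ k, 2 ≤ k → ‖x ^ k‖ ≤ ‖x‖ ^ 2 := fun k hk => by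
    rw [norm_pow]; exact pow_le_pow_of_le_one (norm_nonneg _) hx hk
  have h2 : ∀ k, 2 ≤ k → ‖2 * x ^ k‖ ≤ 2 * ‖x‖ ^ 2 := fun k hk => by
    rw [norm_mul]; simpa using h k hk
  have a1 := norm_sub_le (x ^ 2 + x ^ 8 + 2 * x ^ 3 + 2 * x ^ 7 - 2 * x ^ 4) (2 * x ^ 6)
  have a2 := norm_sub_le (x ^ 2 + x ^ 8 + 2 * x ^ 3 + 2 * x ^ 7) (2 * x ^ 4)
  have a3 := norm_add_le (x ^ 2 + x ^ 8 + 2 * x ^ 3) (2 * x ^ 7)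
  have a4 := norm_add_le (x ^ 2 + x ^ 8) (2 * x ^ 3)
  have a5 := norm_add_le (x ^ 2) (x ^ 8)
  rw [tgN]
  linarith [h 2 le_rfl, h 8 (by norm_num), h2 3 (by norm_num), h2 7 (by norm_num), h2 4 (by norm_num), h2 6 (by norm_num)]

open Classical in
noncomputable def tgc (x : ℂ) : ℂ := if x ^ 10 = 1 then tgN x / 10 else 0

lemma tgc_norm (x : ℂ) (hx : ‖x‖ = 1) : ‖tgc x‖ ≤ 1 := by
  rw [tgc]
  split_ifs
  · have := tgN_norm x hx.le
    rw [hx] at this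
    rw [norm_div]; simp; linarith
  · simp

noncomputable def tgC (ζ : ℂ) : ℂ := ∑' m : ℕ, tgc (ζ ^ m) / (m : ℂ) ^ 2

lemma tg_real_bd (t : ℝ) (ht : 0 ≤ t) : t * Real.exp (-t) ^ 2 ≤ 1 - Real.exp (-t) ^ 10 := by
  have h1 : Real.exp (-t) ≤ 1 := by simpa using ht
  have h0 := Real.exp_pos (-t)
  have h2 : Real.exp (-t) ^ 10 ≤ Real.exp (-t) ^ 2 := pow_le_pow_of_le_one h0.le h1 (by norm_num)
  have h3 : (1 + t) * Real.exp (-t) ≤ 1 := by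
    have := Real.add_one_le_exp t
    rw [Real.exp_neg, ← div_eq_mul_inv, div_le_one (Real.exp_pos _)]; linarith
  have h4 : (1 + t) * Real.exp (-t) ^ 2 ≤ 1 := by nlinarith
  linarith

lemma tg_term_bd (ζ : ℂ) (hζ : ‖ζ‖ = 1) (s : ℂ) (hs : 0 < s.re) (m : ℕ) :
    s.re * ‖tgN ((ζ * cexp (-s)) ^ m) / ((1 - ((ζ * cexp (-s)) ^ m) ^ 10) * m)‖ ≤ 10 * (1 / (m : ℝ) ^ 2) := by
  rcases Nat.eq_zero_or_pos m with rfl | hm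
  · simp
  have hm' : (0 : ℝ) < m := by exact_mod_cast hm
  set x := (ζ * cexp (-s)) ^ m with hx
  have hn : ‖x‖ = Real.exp (-(m * s.re)) := by
    rw [hx, norm_pow, norm_mul, hζ, Complex.norm_exp, one_mul, ← Real.exp_nat_mul]
    simp
  have ht : 0 < m * s.re := by positivity
  have hx1 : ‖x‖ < 1 := by rw [hn]; simpa using ht
  have hx0 : 0 < ‖x‖ := by rw [hn]; positivity
  have hN := tgN_norm x hx1.le
  have hr := tg_real_bd _ ht.le
  rw [← hn] at hr
  have hp : ‖x‖ ^ 10 < 1 := pow_lt_one₀ (norm_nonneg _) hx1 (by norm_num)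
  have hd : 1 - ‖x‖ ^ 10 ≤ ‖1 - x ^ 10‖ := by
    have := norm_sub_norm_le (1 : ℂ) (x ^ 10)
    simpa using this
  rw [norm_div, norm_mul, Complex.norm_natCast]
  have hd0 : 0 < ‖1 - x ^ 10‖ := by linarith
  rw [mul_div_assoc', mul_one_div, div_le_div_iff₀ (by positivity) (by positivity)]
  have h1 : s.re * ‖tgN x‖ ≤ s.re * (10 * ‖x‖ ^ 2) := by gcongr
  calc s.re * ‖tgN x‖ * m ^ 2 ≤ s.re * (10 * ‖x‖ ^ 2) * m ^ 2 := by gcongr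
    _ = 10 * (m * s.re * ‖x‖ ^ 2) * m := by ring
    _ ≤ 10 * ‖1 - x ^ 10‖ * m := by gcongr; linarith
    _ = 10 * (‖1 - x ^ 10‖ * m) := by ring

lemma tg_term_lim (ζ : ℂ) (m : ℕ) (hm : 0 < m) :
    Tendsto (fun s : ℂ => s * (tgN ((ζ * cexp (-s)) ^ m) / ((1 - ((ζ * cexp (-s)) ^ m) ^ 10) * m)))
      (𝓝[≠] 0) (𝓝 (tgc (ζ ^ m) / (m : ℂ) ^ 2)) := by
  have hm' : (m : ℂ) ≠ 0 := by exact_mod_cast hm.ne'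
  have hc : Continuous fun s : ℂ => (ζ * cexp (-s)) ^ m := by fun_prop
  have hNc : Continuous fun s : ℂ => tgN ((ζ * cexp (-s)) ^ m) := by
    unfold tgN; fun_prop
  have hN : Tendsto (fun s : ℂ => tgN ((ζ * cexp (-s)) ^ m)) (𝓝[≠] 0) (𝓝 (tgN (ζ ^ m))) := by
    have := hNc.tendsto 0
    simp only [neg_zero, Complex.exp_zero, mul_one] at this
    exact this.mono_left nhdsWithin_le_nhds
  by_cases h : (ζ ^ m) ^ 10 = 1
  · rw [tgc, if_pos h]
    have hd : HasDerivAt (fun s : ℂ => 1 - ((ζ * cexp (-s)) ^ m) ^ 10) (10 * m : ℂ) 0 := by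
      have e : (fun s : ℂ => 1 - ((ζ * cexp (-s)) ^ m) ^ 10) = fun s => 1 - cexp (-(10 * m) * s) := by
        funext s
        rw [mul_pow, mul_pow, h, one_mul, ← Complex.exp_nat_mul, ← Complex.exp_nat_mul]
        congr 2
        push_cast; ring
      rw [e]
      have := (((hasDerivAt_id (0 : ℂ)).const_mul (-(10 * m : ℂ))).cexp).const_sub 1
      have e2 : -(cexp (-(10 * m : ℂ) * id 0) * (-(10 * m : ℂ) * 1)) = 10 * m := by simp
      rw [e2] at this
      exact this
    have hs := hd.tendsto_slope_zero
    simp only [zero_add, neg_zero, Complex.exp_zero, mul_one, h, sub_self, sub_zero, smul_eq_mul] at hs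
    have := (hN.div hs (by simpa using hm')).div_const (m : ℂ)
    refine (this.congr' ?_).trans (le_of_eq ?_)
    · filter_upwards [self_mem_nhdsWithin] with s hs
      have hs : s ≠ 0 := hs
      simp only [Pi.div_apply]
      by_cases h0 : 1 - ((ζ * cexp (-s)) ^ m) ^ 10 = 0
      · simp [h0]
      field_simp
    · congr 1
      field_simp
  · rw [tgc, if_neg h, zero_div]
    have hD : Tendsto (fun s : ℂ => ((1 - ((ζ * cexp (-s)) ^ m) ^ 10) * m)) (𝓝[≠] 0) (𝓝 ((1 - (ζ ^ m) ^ 10) * m)) := by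
      have : Continuous fun s : ℂ => ((1 - ((ζ * cexp (-s)) ^ m) ^ 10) * m) := by fun_prop
      have := this.tendsto 0
      simp only [neg_zero, Complex.exp_zero, mul_one] at this
      exact this.mono_left nhdsWithin_le_nhds
    have h0 : (1 - (ζ ^ m) ^ 10) * m ≠ 0 := mul_ne_zero (fun h1 => h (by linear_combination -h1)) hm'
    have hid : Tendsto (fun s : ℂ => s) (𝓝[≠] 0) (𝓝 0) := tendsto_id.mono_left nhdsWithin_le_nhds
    simpa using hid.mul (hN.div hD h0)

lemma tgC_summable (ζ : ℂ) (hζ : ‖ζ‖ = 1) : Summable (fun m : ℕ => tgc (ζ ^ m) / (m : ℂ) ^ 2) := by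
  have hS : Summable fun m : ℕ => 1 / (m : ℝ) ^ 2 := Real.summable_one_div_nat_pow.mpr (by norm_num)
  refine Summable.of_norm_bounded hS fun m => ?_
  rw [norm_div, norm_pow, Complex.norm_natCast]
  gcongr
  exact tgc_norm _ (by rw [norm_pow, hζ, one_pow])

lemma tg_log_lim (ζ : ℂ) (hζ : ‖ζ‖ = 1) :
    Tendsto (fun s : ℂ => (s.re : ℂ) * ((∑' m : ℕ, tgN ((ζ * cexp (-s)) ^ m) / ((1 - ((ζ * cexp (-s)) ^ m) ^ 10) * m)) - tgC ζ / s))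
      (𝓝[{s | 0 < s.re}] 0) (𝓝 0) := by
  have hS : Summable fun m : ℕ => 1 / (m : ℝ) ^ 2 := Real.summable_one_div_nat_pow.mpr (by norm_num)
  have hle : (𝓝[{s : ℂ | 0 < s.re}] 0) ≤ 𝓝[≠] 0 := nhdsWithin_mono _ (by
    rintro s hs rfl; simp at hs)
  have key := tendsto_tsum_of_dominated_convergence (𝓕 := 𝓝[{s : ℂ | 0 < s.re}] 0) (β := ℕ)
    (f := fun s m => (s.re : ℂ) * (tgN ((ζ * cexp (-s)) ^ m) / ((1 - ((ζ * cexp (-s)) ^ m) ^ 10) * m) - tgc (ζ ^ m) / (m : ℂ) ^ 2 / s))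
    (g := fun _ => (0 : ℂ)) (bound := fun m => 11 * (1 / (m : ℝ) ^ 2)) (hS.mul_left 11) ?_ ?_
  · rw [tsum_zero] at key
    refine key.congr' ?_
    filter_upwards [self_mem_nhdsWithin] with s hs
    have hs : 0 < s.re := hs
    rw [tsum_mul_left, Summable.tsum_sub, tsum_div_const, tgC]
    · refine Summable.of_norm_bounded ((hS.mul_left 10).div_const s.re) fun m => ?_
      rw [le_div_iff₀ hs, mul_comm]
      exact tg_term_bd ζ hζ s hs m
    · exact (tgC_summable ζ hζ).div_const s
  · intro m
    rcases Nat.eq_zero_or_pos m with rfl | hm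
    · simpa using tendsto_const_nhds
    have h1 := ((tg_term_lim ζ m hm).mono_left hle).sub_const (tgc (ζ ^ m) / (m : ℂ) ^ 2)
    rw [sub_self] at h1
    rw [tendsto_zero_iff_norm_tendsto_zero] at h1 ⊢
    refine squeeze_zero' (Eventually.of_forall fun _ => norm_nonneg _) ?_ h1
    filter_upwards [self_mem_nhdsWithin] with s hs
    have hs : 0 < s.re := hs
    have hs0 : s ≠ 0 := by rintro rfl; simp at hs
    have e : ∀ x y : ℂ, (s.re : ℂ) * (x - y / s) = (s.re / s) * (s * x - y) := fun x y => by field_simp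
    rw [e, norm_mul]
    refine mul_le_of_le_one_left (norm_nonneg _) ?_
    rw [norm_div, Complex.norm_real, Real.norm_eq_abs]
    exact div_le_one_of_le₀ (Complex.abs_re_le_norm s) (norm_nonneg _)
  · filter_upwards [self_mem_nhdsWithin] with s hs m
    have hs : 0 < s.re := hs
    have hsn : 0 < ‖s‖ := lt_of_lt_of_le hs ((le_abs_self _).trans (Complex.abs_re_le_norm s))
    rw [norm_mul, Complex.norm_real, Real.norm_eq_abs, abs_of_pos hs]
    have h1 := tg_term_bd ζ hζ s hs m
    have h2 : s.re * ‖tgc (ζ ^ m) / (m : ℂ) ^ 2 / s‖ ≤ 1 / (m : ℝ) ^ 2 := by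
      have hc := tgc_norm (ζ ^ m) (by rw [norm_pow, hζ, one_pow])
      rw [norm_div, norm_div, norm_pow, Complex.norm_natCast]
      calc s.re * (‖tgc (ζ ^ m)‖ / (m : ℝ) ^ 2 / ‖s‖) = (s.re / ‖s‖) * (‖tgc (ζ ^ m)‖ / (m : ℝ) ^ 2) := by ring
        _ ≤ 1 * (1 / (m : ℝ) ^ 2) := by
          gcongr
          exact div_le_one_of_le₀ ((le_abs_self _).trans (Complex.abs_re_le_norm s)) (norm_nonneg _)
        _ = _ := one_mul _
    calc _ ≤ s.re * (‖tgN ((ζ * cexp (-s)) ^ m) / ((1 - ((ζ * cexp (-s)) ^ m) ^ 10) * m)‖ + ‖tgc (ζ ^ m) / (m : ℂ) ^ 2 / s‖) := by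
          gcongr; exact norm_sub_le _ _
      _ ≤ _ := by rw [mul_add]; linarith


noncomputable def tgw : ℂ := cexp (2 * Real.pi * I / 10)

lemma tg_cos_sum (x : ℝ) (h0 : 0 ≤ x) (h1 : x ≤ 1) :
    HasSum (fun n : ℕ => 1 / (n : ℝ) ^ 2 * Real.cos (2 * Real.pi * n * x)) (Real.pi ^ 2 * (x ^ 2 - x + 1 / 6)) := by
  have h := hasSum_one_div_nat_pow_mul_cos (k := 1) one_ne_zero (x := x) ⟨h0, h1⟩
  have e : Polynomial.eval x (Polynomial.map (algebraMap ℚ ℝ) (Polynomial.bernoulli (2 * 1))) = x ^ 2 - x + 1 / 6 := by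
    simp [Polynomial.bernoulli, Finset.sum_range_succ]
    ring
  rw [e] at h
  have e2 : (-1 : ℝ) ^ (1 + 1) * (2 * Real.pi) ^ (2 * 1) / 2 / (Nat.factorial (2 * 1) : ℝ) = Real.pi ^ 2 := by
    simp [Nat.factorial]; ring
  rw [e2] at h
  simpa using h

lemma tgw_pow (n : ℕ) : tgw ^ n = cexp ((2 * Real.pi * (n / 10) : ℝ) * I) := by
  rw [tgw, ← Complex.exp_nat_mul]; congr 1; push_cast; ring

lemma tgw_pow10 (n : ℕ) : (tgw ^ n) ^ 10 = 1 := by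
  rw [← pow_mul, mul_comm, pow_mul]
  have : tgw ^ 10 = 1 := by
    rw [tgw, ← Complex.exp_nat_mul, Complex.exp_eq_one_iff]
    exact ⟨1, by push_cast; ring⟩
  rw [this, one_pow]

lemma tg_pair_sum (j a : ℕ) (ha : a ≤ 10) :
    HasSum (fun m : ℕ => ((((tgw ^ j) ^ m) ^ a + ((tgw ^ j) ^ m) ^ (10 - a)) / (m : ℂ) ^ 2))
      ((2 * (Real.pi ^ 2 * ((((j * a % 10 : ℕ) : ℝ) / 10) ^ 2 - ((j * a % 10 : ℕ) : ℝ) / 10 + 1 / 6)) : ℝ) : ℂ) := by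
  set y : ℝ := ((j * a % 10 : ℕ) : ℝ) / 10 with hy
  have hlt : j * a % 10 < 10 := Nat.mod_lt _ (by norm_num)
  have hlt' : ((j * a % 10 : ℕ) : ℝ) < 10 := by exact_mod_cast hlt
  have h := ((tg_cos_sum y (by positivity) (by rw [hy]; linarith)).mul_left 2)
  have h' := Complex.hasSum_ofReal.mpr h
  refine h'.congr_fun fun m => ?_
  set x := (tgw ^ j) ^ m with hx
  have hx10 : x ^ 10 = 1 := by rw [hx, ← pow_mul tgw]; exact tgw_pow10 _
  have hxa : x ^ a = cexp (2 * Real.pi * m * y * I) := by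
    rw [hx, ← pow_mul, ← pow_mul, tgw_pow, Complex.exp_eq_exp_iff_exists_int]
    refine ⟨((m * (j * a / 10 : ℕ) : ℕ) : ℤ), ?_⟩
    generalize hdd : j * a / 10 = d at *
    have hd : ((10 * d + j * a % 10 : ℕ) : ℂ) = ((j * a : ℕ) : ℂ) := by rw [← hdd, Nat.div_add_mod]
    push_cast at hd ⊢
    rw [hy]
    push_cast
    linear_combination -2 * Real.pi * m / 10 * I * hd
  have hxb : x ^ (10 - a) = cexp (-(2 * Real.pi * m * y * I)) := by
    have : x ^ a * x ^ (10 - a) = 1 := by rw [← pow_add, Nat.add_sub_cancel' ha, hx10]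
    rw [Complex.exp_neg, ← hxa]
    exact eq_inv_of_mul_eq_one_right this
  rw [hxa, hxb]
  push_cast
  have hc := Complex.two_cos (2 * Real.pi * m * y)
  rw [show 2 * (1 / (m : ℂ) ^ 2 * cos (2 * Real.pi * m * y)) = (2 * cos (2 * Real.pi * m * y)) / (m : ℂ) ^ 2 by ring, hc]
  congr 3
  ring

noncomputable def tgB (n : ℕ) : ℝ := ((n % 10 : ℕ) / 10 : ℝ) ^ 2 - (n % 10 : ℕ) / 10 + 1 / 6

lemma tgC_root (j : ℕ) : tgC (tgw ^ j) =
    ((Real.pi ^ 2 / 5 * (tgB (j * 2) + 2 * tgB (j * 3) - 2 * tgB (j * 4)) : ℝ) : ℂ) := by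
  have h2 := tg_pair_sum j 2 (by norm_num)
  have h3 := tg_pair_sum j 3 (by norm_num)
  have h4 := tg_pair_sum j 4 (by norm_num)
  have h := ((h2.add (h3.mul_left 2)).sub (h4.mul_left 2)).div_const 10
  have h' := h.congr_fun (g := fun m : ℕ => tgc ((tgw ^ j) ^ m) / (m : ℂ) ^ 2) (fun m => by
    rw [tgc, if_pos (by rw [← pow_mul tgw]; exact tgw_pow10 _), tgN]
    norm_num
    ring)
  rw [tgC, h'.tsum_eq]
  simp only [tgB]
  push_cast
  ring

lemma tgC_root_val (j : ℕ) (hj : j < 10) : ∃ c : ℝ, tgC (tgw ^ j) = c ∧ c ≤ Real.pi ^ 2 / 30 ∧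
    (c ≤ Real.pi ^ 2 / 60 ∨ j = 0 ∨ j = 4 ∨ j = 6) := by
  refine ⟨_, tgC_root j, ?_⟩
  have hp : 0 < Real.pi ^ 2 := by positivity
  interval_cases j <;> norm_num [tgB] <;> (try constructor) <;> nlinarith

lemma tgC_val (ζ : ℂ) (hζ : ‖ζ‖ = 1) : ∃ c : ℝ, tgC ζ = c ∧ c ≤ Real.pi ^ 2 / 30 ∧
    (c ≤ Real.pi ^ 2 / 60 ∨ ζ = 1 ∨ ζ = tgw ^ 4 ∨ ζ = tgw ^ 6) := by
  have hp : 0 < Real.pi ^ 2 := by positivity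
  have root : ∀ ξ : ℂ, ξ ^ 10 = 1 → ∃ j < 10, tgw ^ j = ξ := by
    intro ξ h
    have hpr := Complex.isPrimitiveRoot_exp 10 (by norm_num)
    exact hpr.eq_pow_of_pow_eq_one h
  by_cases h : ζ ^ 10 = 1
  · obtain ⟨j, hj, rfl⟩ := root ζ h
    obtain ⟨c, hc, h1, h2⟩ := tgC_root_val j hj
    refine ⟨c, hc, h1, ?_⟩
    rcases h2 with h2 | rfl | rfl | rfl
    · exact Or.inl h2
    · right; left; simp
    · right; right; left; rfl
    · right; right; right; rfl
  have hiff : ∀ m : ℕ, (ζ ^ m) ^ 10 = 1 ↔ orderOf (ζ ^ 10) ∣ m := fun m => by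
    rw [orderOf_dvd_iff_pow_eq_one, ← pow_mul, ← pow_mul, mul_comm]
  have hk1 : orderOf (ζ ^ 10) ≠ 1 := fun h1 => h (orderOf_eq_one_iff.mp h1)
  set k := orderOf (ζ ^ 10) with hk
  rcases Nat.eq_zero_or_pos k with h0 | hpos
  · refine ⟨0, ?_, by positivity, Or.inl (by positivity)⟩
    have : ∀ m : ℕ, tgc (ζ ^ m) / (m : ℂ) ^ 2 = 0 := fun m => by
      by_cases hm : m = 0
      · simp [hm]
      · rw [tgc, if_neg, zero_div]
        rw [hiff, h0, zero_dvd_iff]; exact hm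
    simp [tgC, this]
  have hk2 : 2 ≤ k := by omega
  have hr : (ζ ^ k) ^ 10 = 1 := (hiff k).mpr dvd_rfl
  obtain ⟨j, hj, hjk⟩ := root _ hr
  obtain ⟨c, hc, h1, -⟩ := tgC_root_val j hj
  have hk2' : (2 : ℝ) ≤ k := by exact_mod_cast hk2
  have hk4 : (4 : ℝ) ≤ (k : ℝ) ^ 2 := by nlinarith
  have hle : c / (k : ℝ) ^ 2 ≤ Real.pi ^ 2 / 60 := by
    rw [div_le_iff₀ (by positivity)]; nlinarith
  refine ⟨c / (k : ℝ) ^ 2, ?_, by linarith, Or.inl hle⟩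
  have hinj : Function.Injective (fun l : ℕ => k * l) := fun a b hab => Nat.eq_of_mul_eq_mul_left hpos hab
  have := hinj.tsum_eq (f := fun m : ℕ => tgc (ζ ^ m) / (m : ℂ) ^ 2) (by
    intro m hm
    by_contra hn
    apply hm
    simp only
    rw [tgc, if_neg, zero_div]
    rw [hiff]
    rintro ⟨l, rfl⟩
    exact hn ⟨l, rfl⟩)
  rw [tgC, ← this]
  push_cast
  rw [← hc, hjk, tgC, ← tsum_div_const]
  refine tsum_congr fun l => ?_
  rw [pow_mul, mul_pow, div_div, mul_comm ((k : ℂ) ^ 2)]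


lemma tg_minor_loc (t0 : ℝ) : ∀ᶠ p : ℝ × ℝ in 𝓝 ((0 : ℝ), t0), 0 < p.1 →
    ‖tgF (cexp (p.2 * I - p.1))‖ ≤ Real.exp (3 * (Real.pi ^ 2 / 30) / 4 / p.1) ∨
      ((cexp (t0 * I) = 1 ∨ cexp (t0 * I) = tgw ^ 4 ∨ cexp (t0 * I) = tgw ^ 6) ∧ |p.2 - t0| < p.1) := by
  set A : ℝ := Real.pi ^ 2 / 30 with hA
  have hA0 : 0 < A := by positivity
  have hζ : ‖cexp (t0 * I)‖ = 1 := Complex.norm_exp_ofReal_mul_I t0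
  set ζ := cexp (t0 * I) with hζd
  obtain ⟨c, hc, hcA, hc2⟩ := tgC_val ζ hζ
  have hL := tg_log_lim ζ hζ
  have hL1 := (Metric.tendsto_nhds.mp hL) (A / 8) (by positivity)
  rw [eventually_nhdsWithin_iff] at hL1
  have hs : Tendsto (fun p : ℝ × ℝ => (p.1 : ℂ) - ((p.2 - t0 : ℝ) : ℂ) * I) (𝓝 ((0 : ℝ), t0)) (𝓝 0) := by
    have : Continuous (fun p : ℝ × ℝ => (p.1 : ℂ) - ((p.2 - t0 : ℝ) : ℂ) * I) := by fun_prop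
    have := this.tendsto ((0 : ℝ), t0)
    simpa using this
  filter_upwards [hs.eventually hL1] with p hp hp1
  obtain ⟨σ, θ⟩ := p
  simp only at hp hp1 ⊢
  set s : ℂ := (σ : ℂ) - ((θ - t0 : ℝ) : ℂ) * I with hsd
  have hre : s.re = σ := by simp [hsd]
  have him : s.im = -(θ - t0) := by simp [hsd]
  have hp := hp (by simpa [hre] using hp1)
  have hq : cexp (θ * I - σ) = ζ * cexp (-s) := by
    rw [hζd, ← Complex.exp_add, hsd]; congr 1; push_cast; ring
  have hqn : ‖ζ * cexp (-s)‖ < 1 := by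
    rw [← hq]; exact tg_norm_lt θ σ (by simpa using hp1)
  rw [hq, tgF_exp _ hqn, Complex.norm_exp]
  set L := ∑' m : ℕ, tgN ((ζ * cexp (-s)) ^ m) / ((1 - ((ζ * cexp (-s)) ^ m) ^ 10) * m) with hLd
  rw [dist_zero_right, hc, hre] at hp
  have h1 : σ * L.re - σ * (c * (1 / s).re) < A / 8 := by
    have := (le_abs_self _).trans_lt ((Complex.abs_re_le_norm _).trans_lt hp)
    have e : ((σ : ℂ) * (L - c / s)).re = σ * L.re - σ * (c * (1 / s).re) := by
      rw [Complex.re_ofReal_mul, Complex.sub_re, div_eq_mul_one_div, Complex.re_ofReal_mul]; ring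
    rwa [e] at this
  have hinv : (1 / s).re = σ / (σ ^ 2 + (θ - t0) ^ 2) := by
    rw [one_div, Complex.inv_re, Complex.normSq_apply, hre, him]; congr 1; ring
  have hden : 0 < σ ^ 2 + (θ - t0) ^ 2 := by positivity
  set ρ := σ * (1 / s).re with hρ
  have hρe : ρ = σ ^ 2 / (σ ^ 2 + (θ - t0) ^ 2) := by rw [hρ, hinv]; ring
  have hρ0 : 0 ≤ ρ := by rw [hρe]; positivity
  have hρ1 : ρ ≤ 1 := by rw [hρe, div_le_one hden]; nlinarith [sq_nonneg (θ - t0)]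
  have h1' : σ * L.re < c * ρ + A / 8 := by rw [hρ]; linarith
  have concl : c * ρ ≤ A / 2 → L.re ≤ 3 * A / 4 / σ := by
    intro h; rw [le_div_iff₀ hp1]; linarith
  rcases hc2 with h2 | h2
  · left
    rw [Real.exp_le_exp]
    apply concl
    have : c ≤ A / 2 := by rw [hA]; linarith
    nlinarith
  · by_cases hτ : |θ - t0| < σ
    · exact Or.inr ⟨h2, hτ⟩
    left
    rw [Real.exp_le_exp]
    apply concl
    push Not at hτ
    have hsq : σ ^ 2 ≤ (θ - t0) ^ 2 := by rw [← sq_abs (θ - t0)]; gcongr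
    have : ρ ≤ 1 / 2 := by rw [hρe, div_le_iff₀ hden]; linarith
    nlinarith

lemma tg_minor : ∀ᶠ σ : ℝ in 𝓝[>] (0 : ℝ), ∀ θ : ℝ, θ ∈ Set.Icc (-Real.pi) Real.pi →
    ‖tgF (cexp (θ * I - σ))‖ ≤ Real.exp (3 * (Real.pi ^ 2 / 30) / 4 / σ) ∨
      |θ| < σ ∨ |θ - 4 * Real.pi / 5| < σ ∨ |θ + 4 * Real.pi / 5| < σ := by
  have hπ := Real.pi_pos
  rw [eventually_nhdsWithin_iff]
  have key := IsCompact.eventually_forall_of_forall_eventually (x₀ := (0 : ℝ)) (K := Set.Icc (-Real.pi) Real.pi)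
    isCompact_Icc (P := fun (σ θ : ℝ) => 0 < σ → ‖tgF (cexp (θ * I - σ))‖ ≤ Real.exp (3 * (Real.pi ^ 2 / 30) / 4 / σ) ∨
      |θ| < σ ∨ |θ - 4 * Real.pi / 5| < σ ∨ |θ + 4 * Real.pi / 5| < σ) ?_
  · filter_upwards [key] with σ h hσ θ hθ using h θ hθ hσ
  intro t0 ht0
  filter_upwards [tg_minor_loc t0] with p hp hp1
  rcases hp hp1 with h | ⟨h, h'⟩
  · exact Or.inl h
  right
  have gen : ∀ b : ℝ, cexp (t0 * I) = cexp (b * I) → ∃ n : ℤ, t0 = b + n * (2 * Real.pi) := by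
    intro b hb
    rw [Complex.exp_eq_exp_iff_exists_int] at hb
    obtain ⟨n, hn⟩ := hb
    refine ⟨n, ?_⟩
    have : (t0 : ℂ) * I = ((b + n * (2 * Real.pi) : ℝ) : ℂ) * I := by rw [hn]; push_cast; ring
    exact_mod_cast mul_right_cancel₀ Complex.I_ne_zero this
  have hint : ∀ (n a b : ℤ), (a : ℝ) < n → (n : ℝ) < b → a < n ∧ n < b := fun n a b h1 h2 =>
    ⟨by exact_mod_cast h1, by exact_mod_cast h2⟩
  obtain ⟨l, u⟩ := ht0
  rcases h with h | h | h
  · obtain ⟨n, hn⟩ := gen 0 (by simpa using h)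
    have := hint n (-1) 1 (by push_cast; nlinarith) (by push_cast; nlinarith)
    obtain rfl : n = 0 := by omega
    left; simpa [hn] using h'
  · rw [tgw_pow] at h
    obtain ⟨n, hn⟩ := gen _ h
    push_cast at hn
    have := hint n (-1) 1 (by push_cast; nlinarith) (by push_cast; nlinarith)
    obtain rfl : n = 0 := by omega
    right; left
    rw [show 4 * Real.pi / 5 = t0 by rw [hn]; push_cast; ring]; exact h'
  · rw [tgw_pow] at h
    obtain ⟨n, hn⟩ := gen _ h
    push_cast at hn
    have := hint n (-2) 0 (by push_cast; nlinarith) (by push_cast; nlinarith)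
    obtain rfl : n = -1 := by omega
    right; right
    rw [show p.2 + 4 * Real.pi / 5 = p.2 - t0 by rw [hn]; push_cast; ring]; exact h'


lemma tg_circ_summ (g : ℕ → ℂ) (hg : ∀ q : ℂ, ‖q‖ < 1 → HasSum (fun n : ℕ => g n * q ^ n) (tgF q))
    (σ : ℝ) (hσ : 0 < σ) : Summable fun k : ℕ => ‖g k‖ * Real.exp (-σ) ^ k := by
  have := (hg (cexp (-σ)) (by rw [Complex.norm_exp]; simpa using hσ)).summable.norm
  refine this.congr fun k => ?_
  rw [norm_mul, norm_pow, Complex.norm_exp]; simp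

lemma tg_circ_cont (g : ℕ → ℂ) (hg : ∀ q : ℂ, ‖q‖ < 1 → HasSum (fun n : ℕ => g n * q ^ n) (tgF q))
    (σ : ℝ) (hσ : 0 < σ) : Continuous fun θ : ℝ => tgF (cexp (θ * I - σ)) := by
  have e : (fun θ : ℝ => tgF (cexp (θ * I - σ))) = fun θ : ℝ => ∑' k : ℕ, g k * cexp (θ * I - σ) ^ k := by
    funext θ
    exact (hg _ (tg_norm_lt θ σ (by simpa using hσ))).tsum_eq.symm
  rw [e]
  refine continuous_tsum (fun k => by fun_prop) (tg_circ_summ g hg σ hσ) fun k θ => ?_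
  rw [norm_mul, norm_pow, Complex.norm_exp]; simp

lemma tg_orth (k n : ℕ) : ∫ θ in (-Real.pi)..Real.pi, cexp ((((k : ℂ) - n) * I) * (θ : ℂ)) = if k = n then (2 * Real.pi : ℂ) else 0 := by
  split_ifs with h
  · simp [h]; ring
  have hc : ((k : ℂ) - n) * I ≠ 0 := mul_ne_zero (sub_ne_zero.mpr (by exact_mod_cast h)) Complex.I_ne_zero
  rw [integral_exp_mul_complex hc, div_eq_zero_iff]
  left
  rw [sub_eq_zero, Complex.exp_eq_exp_iff_exists_int]
  exact ⟨(k : ℤ) - n, by push_cast; ring⟩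

lemma tg_cauchy (g : ℕ → ℂ) (hg : ∀ q : ℂ, ‖q‖ < 1 → HasSum (fun n : ℕ => g n * q ^ n) (tgF q))
    (σ : ℝ) (hσ : 0 < σ) (n : ℕ) :
    ∫ θ in (-Real.pi)..Real.pi, tgF (cexp (θ * I - σ)) * cexp (-(n * θ * I)) = 2 * Real.pi * g n * cexp (-(n * σ)) := by
  have h := intervalIntegral.hasSum_integral_of_dominated_convergence (a := -Real.pi) (b := Real.pi) (μ := MeasureTheory.volume)
    (F := fun (k : ℕ) (θ : ℝ) => g k * cexp (θ * I - σ) ^ k * cexp (-(n * θ * I)))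
    (f := fun θ : ℝ => tgF (cexp (θ * I - σ)) * cexp (-(n * θ * I)))
    (fun k _ => ‖g k‖ * Real.exp (-σ) ^ k) ?_ ?_ ?_ ?_ ?_
  · have e : ∀ k : ℕ, (∫ θ in (-Real.pi)..Real.pi, g k * cexp (θ * I - σ) ^ k * cexp (-(n * θ * I))) =
      if k = n then 2 * Real.pi * g n * cexp (-(n * σ)) else 0 := by
      intro k
      have e1 : ∀ θ : ℝ, g k * cexp (θ * I - σ) ^ k * cexp (-(n * θ * I)) =
          g k * cexp (-(k * σ)) * cexp ((((k : ℂ) - n) * I) * (θ : ℂ)) := fun θ => by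
        rw [← Complex.exp_nat_mul, mul_assoc, mul_assoc (g k), ← Complex.exp_add, ← Complex.exp_add]
        congr 2; ring
      simp only [e1]
      rw [intervalIntegral.integral_const_mul, tg_orth]
      split_ifs with hk
      · rw [hk]; ring
      · simp
    simp only [e] at h
    exact h.unique (hasSum_ite_eq n _)
  · intro k
    exact (by fun_prop : Continuous _).aestronglyMeasurable
  · intro k
    refine Eventually.of_forall fun θ _ => ?_
    rw [norm_mul, norm_mul, norm_pow, Complex.norm_exp, Complex.norm_exp]; simp
  · exact Eventually.of_forall fun θ _ => tg_circ_summ g hg σ hσ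
  · exact intervalIntegrable_const
  · exact Eventually.of_forall fun θ _ => (hg _ (tg_norm_lt θ σ (by simpa using hσ))).mul_right _


noncomputable def tgS (n : ℕ) : ℝ := Real.sqrt (Real.pi ^ 2 / 30 / n)
noncomputable def tgL (n : ℕ) : ℝ := Real.sqrt (Real.pi ^ 2 / 30 * n)

lemma tgS_pos (n : ℕ) (hn : 0 < n) : 0 < tgS n := by
  have : (0 : ℝ) < n := by exact_mod_cast hn
  exact Real.sqrt_pos.mpr (by positivity)

lemma tgL_pos (n : ℕ) (hn : 0 < n) : 0 < tgL n := by
  have : (0 : ℝ) < n := by exact_mod_cast hn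
  exact Real.sqrt_pos.mpr (by positivity)

lemma tg_nS (n : ℕ) (hn : 0 < n) : n * tgS n = tgL n := by
  have : (0 : ℝ) < n := by exact_mod_cast hn
  rw [tgS, tgL, eq_comm, Real.sqrt_eq_iff_eq_sq (by positivity) (by positivity), mul_pow, Real.sq_sqrt (by positivity)]
  field_simp

lemma tg_SL (n : ℕ) (hn : 0 < n) : tgS n * tgL n = Real.pi ^ 2 / 30 := by
  have : (0 : ℝ) < n := by exact_mod_cast hn
  rw [tgS, tgL, ← Real.sqrt_mul (by positivity)]
  rw [Real.sqrt_eq_iff_eq_sq (by positivity) (by positivity)]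
  field_simp

lemma tgL_tendsto : Tendsto tgL atTop atTop := by
  have : (0 : ℝ) < Real.pi ^ 2 / 30 := by positivity
  exact Real.tendsto_sqrt_atTop.comp (tendsto_natCast_atTop_atTop.const_mul_atTop this)

lemma tgS_tendsto : Tendsto tgS atTop (𝓝 0) := by
  have h : Tendsto (fun n : ℕ => Real.pi ^ 2 / 30 / (n : ℝ)) atTop (𝓝 0) := tendsto_const_div_atTop_nhds_zero_nat _
  have := (Real.continuous_sqrt.tendsto 0).comp h
  rw [Real.sqrt_zero] at this
  exact this

lemma tg_arc_pt (n : ℕ) (hn : 0 < n) (t v : ℝ) :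
    cexp (-(tgL n)) * (tgF (cexp ((t + tgS n / Real.sqrt (tgL n) * v : ℝ) * I - tgS n)) *
      cexp (-(n * ((t + tgS n / Real.sqrt (tgL n) * v : ℝ) - t) * I))) =
    (tgF (cexp (t * I - tgS n * (1 - (v / Real.sqrt (tgL n) : ℝ) * I))) *
      cexp (-(Real.pi ^ 2 / 30 / (tgS n * (1 - (v / Real.sqrt (tgL n) : ℝ) * I))))) *
      cexp (-(v ^ 2 / (1 - (v / Real.sqrt (tgL n) : ℝ) * I))) := by
  have hL := tgL_pos n hn
  have hS := tgS_pos n hn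
  have hsq : 0 < Real.sqrt (tgL n) := Real.sqrt_pos.mpr hL
  set w : ℝ := v / Real.sqrt (tgL n) with hw
  have hv : v ^ 2 = tgL n * w ^ 2 := by
    rw [hw, div_pow, Real.sq_sqrt hL.le]; field_simp
  have hw2 : t + tgS n / Real.sqrt (tgL n) * v = t + tgS n * w := by rw [hw]; ring
  have hden : (1 - (w : ℂ) * I) ≠ 0 := by
    intro h
    have := congrArg Complex.re h
    simp at this
  have hSc : (tgS n : ℂ) ≠ 0 := by exact_mod_cast hS.ne'
  have hA : ((Real.pi : ℂ) ^ 2 / 30) = tgS n * tgL n := by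
    rw [← Complex.ofReal_mul, tg_SL n hn]; push_cast; ring
  have hnS : (n : ℂ) * tgS n = tgL n := by
    rw [← tg_nS n hn]; push_cast; ring
  have hvc : (v : ℂ) ^ 2 = tgL n * w ^ 2 := by exact_mod_cast hv
  rw [hw2, hA, hvc]
  have e1 : ((t + tgS n * w : ℝ) : ℂ) * I - tgS n = t * I - tgS n * (1 - w * I) := by push_cast; ring
  rw [e1, mul_left_comm, mul_assoc (tgF _), ← Complex.exp_add, ← Complex.exp_add]
  congr 2
  have e2 : (n : ℂ) * (((t + tgS n * w : ℝ) : ℂ) - t) = tgL n * w := by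
    rw [← hnS]; push_cast; ring
  rw [e2]
  field_simp
  ring_nf
  simp only [Complex.I_sq]
  ring

lemma tg_arc (g : ℕ → ℂ) (hg : ∀ q : ℂ, ‖q‖ < 1 → HasSum (fun n : ℕ => g n * q ^ n) (tgF q))
    (t : ℝ) (c : ℂ)
    (H : Tendsto (fun s => tgF (cexp (t * I - s)) * cexp (-(Real.pi ^ 2 / 30 / s))) (𝓝[tgSec] 0) (𝓝 c)) :
    Tendsto (fun n : ℕ => cexp (-(tgL n)) * ((Real.sqrt (tgL n) / tgS n : ℝ) *
      ∫ θ in (t - tgS n)..(t + tgS n), tgF (cexp (θ * I - tgS n)) * cexp (-(n * (θ - t) * I))))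
      atTop (𝓝 (c * Real.sqrt Real.pi)) := by
  set G := fun s => tgF (cexp (t * I - s)) * cexp (-(Real.pi ^ 2 / 30 / s)) with hG
  set f := fun (n : ℕ) (v : ℝ) => cexp (-(tgL n)) * (tgF (cexp ((t + tgS n / Real.sqrt (tgL n) * v : ℝ) * I - tgS n)) *
      cexp (-(n * ((t + tgS n / Real.sqrt (tgL n) * v : ℝ) - t) * I))) with hf
  have hpos : ∀ᶠ n : ℕ in atTop, 0 < n := eventually_gt_atTop 0
  have hsecmem : ∀ n : ℕ, 0 < n → ∀ v : ℝ, |v| ≤ Real.sqrt (tgL n) →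
      (tgS n * (1 - (v / Real.sqrt (tgL n) : ℝ) * I) : ℂ) ∈ tgSec := by
    intro n hn v hv
    have hS := tgS_pos n hn
    have hL := tgL_pos n hn
    have hsq : 0 < Real.sqrt (tgL n) := Real.sqrt_pos.mpr hL
    constructor
    · rw [Complex.re_ofReal_mul]; simpa using hS
    · rw [Complex.re_ofReal_mul, Complex.im_ofReal_mul, abs_mul, abs_of_pos hS]
      simp only [sub_im, one_im, mul_im, ofReal_re, I_im, mul_one, ofReal_im, I_re, mul_zero, add_zero, zero_sub, abs_neg,
        sub_re, one_re, mul_re, zero_mul, sub_zero, sub_self]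
      rw [abs_div, abs_of_pos hsq]
      have : |v| / Real.sqrt (tgL n) ≤ 1 := div_le_one_of_le₀ hv hsq.le
      nlinarith
  have hsnorm : ∀ n : ℕ, 0 < n → ∀ v : ℝ, |v| ≤ Real.sqrt (tgL n) →
      ‖(tgS n * (1 - (v / Real.sqrt (tgL n) : ℝ) * I) : ℂ)‖ ≤ 2 * tgS n := by
    intro n hn v hv
    have hS := tgS_pos n hn
    have hL := tgL_pos n hn
    have hsq : 0 < Real.sqrt (tgL n) := Real.sqrt_pos.mpr hL
    rw [norm_mul, Complex.norm_real, Real.norm_eq_abs, abs_of_pos hS, mul_comm]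
    gcongr
    refine (norm_sub_le _ _).trans ?_
    rw [norm_mul, Complex.norm_real, Complex.norm_I, Real.norm_eq_abs, abs_div, abs_of_pos hsq, norm_one, mul_one]
    have : |v| / Real.sqrt (tgL n) ≤ 1 := div_le_one_of_le₀ hv hsq.le
    linarith
  have hbd : ∀ᶠ n : ℕ in atTop, ∀ v : ℝ, |v| ≤ Real.sqrt (tgL n) →
      ‖G (tgS n * (1 - (v / Real.sqrt (tgL n) : ℝ) * I))‖ ≤ ‖c‖ + 1 := by
    have h1 : ∀ᶠ s in 𝓝[tgSec] (0 : ℂ), ‖G s‖ < ‖c‖ + 1 := H.norm.eventually_lt_const (by linarith)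
    rw [eventually_nhdsWithin_iff, Metric.eventually_nhds_iff] at h1
    obtain ⟨ε, hε, h1⟩ := h1
    have h2 : ∀ᶠ n in atTop, tgS n < ε / 2 := tgS_tendsto.eventually_lt_const (by positivity)
    filter_upwards [h2, hpos] with n hn hn0 v hv
    refine (h1 ?_ (hsecmem n hn0 v hv)).le
    rw [dist_zero_right]
    linarith [hsnorm n hn0 v hv]
  have hint : ∀ᶠ n : ℕ in atTop, (∫ v, (Set.Ioc (-Real.sqrt (tgL n)) (Real.sqrt (tgL n))).indicator (f n) v) =
      cexp (-(tgL n)) * ((Real.sqrt (tgL n) / tgS n : ℝ) *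
      ∫ θ in (t - tgS n)..(t + tgS n), tgF (cexp (θ * I - tgS n)) * cexp (-(n * (θ - t) * I))) := by
    filter_upwards [hpos] with n hn
    have hS := tgS_pos n hn
    have hL := tgL_pos n hn
    have hsq : 0 < Real.sqrt (tgL n) := Real.sqrt_pos.mpr hL
    rw [MeasureTheory.integral_indicator measurableSet_Ioc, ← intervalIntegral.integral_of_le (by linarith)]
    rw [hf]
    simp only
    rw [intervalIntegral.integral_const_mul,
      intervalIntegral.integral_comp_add_mul (fun θ : ℝ => tgF (cexp (θ * I - tgS n)) * cexp (-(n * (θ - t) * I)))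
        (div_pos hS hsq).ne' t]
    rw [inv_div, Complex.real_smul, mul_neg, div_mul_cancel₀ _ hsq.ne', ← sub_eq_add_neg]
  have hgauss : (∫ v : ℝ, c * cexp (-(v : ℂ) ^ 2)) = c * Real.sqrt Real.pi := by
    rw [MeasureTheory.integral_const_mul]
    congr 1
    have h := integral_gaussian 1
    rw [div_one] at h
    rw [← h, ← integral_complex_ofReal]
    congr 1
    funext v
    push_cast
    congr 1; ring
  rw [← hgauss]
  refine Tendsto.congr' hint ?_
  refine MeasureTheory.tendsto_integral_filter_of_dominated_convergence
    (fun v => (‖c‖ + 1) * Real.exp (-(1 / 2) * v ^ 2)) ?_ ?_ ?_ ?_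
  · filter_upwards [hpos] with n hn
    refine MeasureTheory.AEStronglyMeasurable.indicator ?_ measurableSet_Ioc
    refine Continuous.aestronglyMeasurable ?_
    have h1 := tg_circ_cont g hg (tgS n) (tgS_pos n hn)
    have h2 : Continuous fun v : ℝ => t + tgS n / Real.sqrt (tgL n) * v := by fun_prop
    have h3 := h1.comp h2
    refine continuous_const.mul (h3.mul (by fun_prop))
  · filter_upwards [hpos, hbd] with n hn hb
    refine Eventually.of_forall fun v => ?_
    by_cases hv : v ∈ Set.Ioc (-Real.sqrt (tgL n)) (Real.sqrt (tgL n))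
    · have hv' : |v| ≤ Real.sqrt (tgL n) := abs_le.mpr ⟨hv.1.le, hv.2⟩
      have hL := tgL_pos n hn
      have hsq : 0 < Real.sqrt (tgL n) := Real.sqrt_pos.mpr hL
      rw [Set.indicator_of_mem hv, hf]
      simp only
      rw [tg_arc_pt n hn, norm_mul]
      refine mul_le_mul (hb v hv') ?_ (norm_nonneg _) (by positivity)
      rw [Complex.norm_exp, Real.exp_le_exp]
      set w : ℝ := v / Real.sqrt (tgL n) with hw
      have hw1 : w ^ 2 ≤ 1 := by
        rw [sq_le_one_iff_abs_le_one, hw, abs_div, abs_of_pos hsq]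
        exact div_le_one_of_le₀ hv' hsq.le
      have e : (-((v : ℂ) ^ 2 / (1 - w * I))).re = -(v ^ 2 / (1 + w ^ 2)) := by
        rw [← Complex.ofReal_pow, Complex.neg_re, div_eq_mul_inv, Complex.re_ofReal_mul, Complex.inv_re, Complex.normSq_apply]
        simp
        ring
      rw [e]
      have : v ^ 2 / 2 ≤ v ^ 2 / (1 + w ^ 2) := by gcongr; linarith
      linarith
    · rw [Set.indicator_of_notMem hv, norm_zero]; positivity
  · exact (integrable_exp_neg_mul_sq (by norm_num)).const_mul _
  · refine Eventually.of_forall fun v => ?_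
    have hsqL : Tendsto (fun n => Real.sqrt (tgL n)) atTop atTop := Real.tendsto_sqrt_atTop.comp tgL_tendsto
    have hw : Tendsto (fun n => ((v / Real.sqrt (tgL n) : ℝ) : ℂ)) atTop (𝓝 0) := by
      have := hsqL.const_div_atTop v
      exact_mod_cast (Complex.continuous_ofReal.tendsto 0).comp this
    have hev : ∀ᶠ n in atTop, |v| < Real.sqrt (tgL n) := hsqL.eventually_gt_atTop _
    have hden : Tendsto (fun n => 1 - ((v / Real.sqrt (tgL n) : ℝ) : ℂ) * I) atTop (𝓝 1) := by
      simpa using (hw.mul_const I).const_sub 1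
    have hs : Tendsto (fun n => (tgS n * (1 - (v / Real.sqrt (tgL n) : ℝ) * I) : ℂ)) atTop (𝓝[tgSec] 0) := by
      rw [tendsto_nhdsWithin_iff]
      constructor
      · have h1 : Tendsto (fun n => (tgS n : ℂ)) atTop (𝓝 0) := by
          exact_mod_cast (Complex.continuous_ofReal.tendsto 0).comp tgS_tendsto
        simpa using h1.mul hden
      · filter_upwards [hpos, hev] with n hn hv using hsecmem n hn v hv.le
    have hex : Tendsto (fun n => cexp (-((v : ℂ) ^ 2 / (1 - (v / Real.sqrt (tgL n) : ℝ) * I)))) atTop (𝓝 (cexp (-(v : ℂ) ^ 2))) := by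
      have h1 : Tendsto (fun n => (v : ℂ) ^ 2 / (1 - (v / Real.sqrt (tgL n) : ℝ) * I)) atTop (𝓝 ((v : ℂ) ^ 2 / 1)) :=
        tendsto_const_nhds.div hden one_ne_zero
      rw [div_one] at h1
      exact (Complex.continuous_exp.tendsto _).comp h1.neg
    refine ((H.comp hs).mul hex).congr' ?_
    filter_upwards [hpos, hev] with n hn hv
    rw [Set.indicator_of_mem (show v ∈ Set.Ioc _ _ from ⟨(abs_lt.mp hv).1, (abs_lt.mp hv).2.le⟩), hf]
    simp only
    rw [tg_arc_pt n hn]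
    rfl


noncomputable def tgm (n : ℕ) : ℝ := Real.sin (Real.pi / 5) + Real.sin (2 * Real.pi / 5 * (2 * (n : ℝ) + 1))

lemma tg_arc' (g : ℕ → ℂ) (hg : ∀ q : ℂ, ‖q‖ < 1 → HasSum (fun n : ℕ => g n * q ^ n) (tgF q))
    (t : ℝ) (c : ℂ)
    (H : Tendsto (fun s => tgF (cexp (t * I - s)) * cexp (-(Real.pi ^ 2 / 30 / s))) (𝓝[tgSec] 0) (𝓝 c)) :
    Tendsto (fun n : ℕ => cexp (-(tgL n)) * ((Real.sqrt (tgL n) / tgS n : ℝ) *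
      ∫ θ in (t - tgS n)..(t + tgS n), tgF (cexp (θ * I - tgS n)) * cexp (-(n * θ * I)))
      - cexp (-(n * t * I)) * (c * Real.sqrt Real.pi)) atTop (𝓝 0) := by
  have h := (tg_arc g hg t c H).sub_const (c * Real.sqrt Real.pi)
  rw [sub_self] at h
  rw [tendsto_zero_iff_norm_tendsto_zero] at h ⊢
  refine h.congr fun n => ?_
  have e1 : ∀ θ : ℝ, tgF (cexp (θ * I - tgS n)) * cexp (-(n * θ * I)) =
      cexp (-(n * t * I)) * (tgF (cexp (θ * I - tgS n)) * cexp (-(n * (θ - t) * I))) := fun θ => by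
    rw [mul_left_comm, ← Complex.exp_add]; congr 2; ring
  simp only [e1]
  rw [intervalIntegral.integral_const_mul]
  have hn : ‖cexp (-(n * t * I))‖ = 1 := by
    rw [Complex.norm_exp]; simp
  rw [← one_mul ‖_ - c * _‖, ← hn, ← norm_mul]
  congr 1
  ring

lemma tg_scale_zero : Tendsto (fun n : ℕ => Real.exp (-(tgL n)) * (Real.sqrt (tgL n) / tgS n) *
    (8 * Real.pi * Real.exp (3 / 4 * tgL n))) atTop (𝓝 0) := by
  have h1 : Tendsto (fun x : ℝ => (x ^ 2 * Real.exp (-x))) atTop (𝓝 0) := Real.tendsto_pow_mul_exp_neg_atTop_nhds_zero 2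
  have h2 : Tendsto (fun n : ℕ => tgL n * (1 / 4)) atTop atTop := tgL_tendsto.atTop_mul_const (by norm_num)
  have h3 := (h1.comp h2).const_mul (16 * 8 * Real.pi * (30 / Real.pi ^ 2))
  rw [mul_zero] at h3
  refine squeeze_zero' ?_ ?_ h3
  · filter_upwards [eventually_gt_atTop 0] with n hn
    have := tgS_pos n hn
    have := tgL_pos n hn
    positivity
  · filter_upwards [eventually_gt_atTop 0, tgL_tendsto.eventually_ge_atTop 1] with n hn h1
    have hS := tgS_pos n hn
    have hL := tgL_pos n hn
    have hSL := tg_SL n hn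
    have hinv : 1 / tgS n = tgL n * (30 / Real.pi ^ 2) := by
      have : Real.pi ^ 2 ≠ 0 := by positivity
      rw [div_eq_iff hS.ne', mul_right_comm, mul_comm (tgL n), hSL]; field_simp
    have hsq : Real.sqrt (tgL n) ≤ tgL n := by
      rw [Real.sqrt_le_left hL.le]; nlinarith
    have he : Real.exp (-(tgL n)) * Real.exp (3 / 4 * tgL n) = Real.exp (-(tgL n * (1 / 4))) := by
      rw [← Real.exp_add]; congr 1; ring
    simp only [Function.comp]
    calc _ = Real.sqrt (tgL n) * (1 / tgS n) * (8 * Real.pi) * (Real.exp (-(tgL n)) * Real.exp (3 / 4 * tgL n)) := by ring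
      _ = Real.sqrt (tgL n) * (tgL n * (30 / Real.pi ^ 2)) * (8 * Real.pi) * Real.exp (-(tgL n * (1 / 4))) := by rw [he, hinv]
      _ ≤ tgL n * (tgL n * (30 / Real.pi ^ 2)) * (8 * Real.pi) * Real.exp (-(tgL n * (1 / 4))) := by gcongr
      _ = _ := by ring

lemma tg_split (g : ℕ → ℂ) (hg : ∀ q : ℂ, ‖q‖ < 1 → HasSum (fun n : ℕ => g n * q ^ n) (tgF q)) :
    ∀ᶠ n : ℕ in atTop, ‖(∫ θ in (-Real.pi)..Real.pi, tgF (cexp (θ * I - tgS n)) * cexp (-(n * θ * I)))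
      - (∫ θ in (0 - tgS n)..(0 + tgS n), tgF (cexp (θ * I - tgS n)) * cexp (-(n * θ * I)))
      - (∫ θ in (1 * (4 * Real.pi / 5) - tgS n)..(1 * (4 * Real.pi / 5) + tgS n), tgF (cexp (θ * I - tgS n)) * cexp (-(n * θ * I)))
      - (∫ θ in (-1 * (4 * Real.pi / 5) - tgS n)..(-1 * (4 * Real.pi / 5) + tgS n), tgF (cexp (θ * I - tgS n)) * cexp (-(n * θ * I)))‖
      ≤ 8 * Real.pi * Real.exp (3 / 4 * tgL n) := by
  have hπ := Real.pi_pos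
  have hS0 : Tendsto tgS atTop (𝓝[>] 0) := by
    rw [tendsto_nhdsWithin_iff]
    refine ⟨tgS_tendsto, ?_⟩
    filter_upwards [eventually_gt_atTop 0] with n hn using tgS_pos n hn
  have hsm : ∀ᶠ n in atTop, tgS n < Real.pi / 10 := tgS_tendsto.eventually_lt_const (by positivity)
  filter_upwards [hS0.eventually tg_minor, hsm, eventually_gt_atTop 0] with n hmin hsm hn
  have hS := tgS_pos n hn
  set F : ℝ → ℂ := fun θ => tgF (cexp (θ * I - tgS n)) * cexp (-(n * θ * I)) with hF
  have hFc : Continuous F := (tg_circ_cont g hg _ hS).mul (by fun_prop)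
  have hFi : ∀ a b : ℝ, IntervalIntegrable F MeasureTheory.volume a b := fun a b => hFc.intervalIntegrable a b
  set b := 4 * Real.pi / 5 with hb
  have hE : 3 * (Real.pi ^ 2 / 30) / 4 / tgS n = 3 / 4 * tgL n := by
    rw [← tg_SL n hn]; field_simp
  rw [hE] at hmin
  have hbd : ∀ x y : ℝ, -Real.pi ≤ x → x ≤ y → y ≤ Real.pi →
      (∀ θ, x < θ → θ ≤ y → ¬ (|θ| < tgS n ∨ |θ - b| < tgS n ∨ |θ + b| < tgS n)) →
      ‖∫ θ in x..y, F θ‖ ≤ 2 * Real.pi * Real.exp (3 / 4 * tgL n) := by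
    intro x y hx hxy hy hno
    have h1 := intervalIntegral.norm_integral_le_of_norm_le_const (a := x) (b := y) (f := F) (C := Real.exp (3 / 4 * tgL n)) (by
      intro θ hθ
      rw [Set.uIoc_of_le hxy] at hθ
      rcases hmin θ ⟨by linarith [hθ.1], by linarith [hθ.2]⟩ with h | h
      · rw [hF]; simp only
        rw [norm_mul, Complex.norm_exp (-(n * θ * I))]
        simpa using h
      · exact absurd h (hno θ hθ.1 hθ.2))
    refine h1.trans ?_
    rw [abs_of_nonneg (by linarith), mul_comm]
    gcongr
    linarith
  have r1 := hbd (-Real.pi) (-1 * b - tgS n) le_rfl (by linarith) (by linarith) (by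
    rintro θ h1 h2 (h | h | h) <;> rw [abs_lt] at h <;> linarith [h.1, h.2])
  have r2 := hbd (-1 * b + tgS n) (0 - tgS n) (by linarith) (by linarith) (by linarith) (by
    rintro θ h1 h2 (h | h | h) <;> rw [abs_lt] at h <;> linarith [h.1, h.2])
  have r3 := hbd (0 + tgS n) (1 * b - tgS n) (by linarith) (by linarith) (by linarith) (by
    rintro θ h1 h2 (h | h | h) <;> rw [abs_lt] at h <;> linarith [h.1, h.2])
  have r4 := hbd (1 * b + tgS n) Real.pi (by linarith) (by linarith) le_rfl (by
    rintro θ h1 h2 (h | h | h) <;> rw [abs_lt] at h <;> linarith [h.1, h.2])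
  have e : (∫ θ in (-Real.pi)..Real.pi, F θ) - (∫ θ in (0 - tgS n)..(0 + tgS n), F θ)
      - (∫ θ in (1 * b - tgS n)..(1 * b + tgS n), F θ) - (∫ θ in (-1 * b - tgS n)..(-1 * b + tgS n), F θ) =
      (∫ θ in (-Real.pi)..(-1 * b - tgS n), F θ) + (∫ θ in (-1 * b + tgS n)..(0 - tgS n), F θ)
      + (∫ θ in (0 + tgS n)..(1 * b - tgS n), F θ) + (∫ θ in (1 * b + tgS n)..Real.pi, F θ) := by
    rw [← intervalIntegral.integral_add_adjacent_intervals (hFi (-Real.pi) (-1 * b - tgS n)) (hFi _ Real.pi),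
      ← intervalIntegral.integral_add_adjacent_intervals (hFi (-1 * b - tgS n) (-1 * b + tgS n)) (hFi _ Real.pi),
      ← intervalIntegral.integral_add_adjacent_intervals (hFi (-1 * b + tgS n) (0 - tgS n)) (hFi _ Real.pi),
      ← intervalIntegral.integral_add_adjacent_intervals (hFi (0 - tgS n) (0 + tgS n)) (hFi _ Real.pi),
      ← intervalIntegral.integral_add_adjacent_intervals (hFi (0 + tgS n) (1 * b - tgS n)) (hFi _ Real.pi),
      ← intervalIntegral.integral_add_adjacent_intervals (hFi (1 * b - tgS n) (1 * b + tgS n)) (hFi _ Real.pi)]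
    ring
  rw [e]
  refine (norm_add₄_le).trans ?_
  linarith

lemma tg_trig (n : ℕ) : cexp (-(n * (0 : ℝ) * I)) * ((2 * Real.sin (Real.pi / 5) : ℝ) : ℂ)
    + cexp (-(n * ((1 * (4 * Real.pi / 5) : ℝ) : ℂ) * I)) * cexp ((1 : ℝ) * (Real.pi / 10) * I)
    + cexp (-(n * ((-1 * (4 * Real.pi / 5) : ℝ) : ℂ) * I)) * cexp (((-1 : ℝ) : ℂ) * (Real.pi / 10) * I)
    = ((2 * tgm n : ℝ) : ℂ) := by
  have h1 : Real.sin (2 * Real.pi / 5 * (2 * (n : ℝ) + 1)) = Real.cos (Real.pi / 10 - 4 * Real.pi * n / 5) := by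
    rw [← Real.sin_pi_div_two_sub]; congr 1; ring
  unfold tgm
  rw [h1, ← Complex.exp_add, ← Complex.exp_add]
  push_cast
  rw [mul_add, Complex.two_cos, mul_zero, zero_mul, neg_zero, Complex.exp_zero, one_mul, add_assoc]
  congr 3 <;> ring_nf

lemma tg_asym (g : ℕ → ℂ) (hg : ∀ q : ℂ, ‖q‖ < 1 → HasSum (fun n : ℕ => g n * q ^ n) (tgF q)) :
    Tendsto (fun n : ℕ => cexp (-(tgL n)) * ((Real.sqrt (tgL n) / tgS n : ℝ) * (2 * Real.pi * g n * cexp (-(tgL n))))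
      - ((2 * tgm n * Real.sqrt Real.pi : ℝ) : ℂ)) atTop (𝓝 0) := by
  have a0 := tg_arc' g hg 0 _ tg_main_zero
  have a1 := tg_arc' g hg (1 * (4 * Real.pi / 5)) _ (tg_main_pm 4 1 (Or.inl rfl) (by norm_num))
  have a2 := tg_arc' g hg (-1 * (4 * Real.pi / 5)) _ (tg_main_pm (-4) (-1) (Or.inr rfl) (by norm_num))
  have hr : Tendsto (fun n : ℕ => cexp (-(tgL n)) * ((Real.sqrt (tgL n) / tgS n : ℝ) *
      ((∫ θ in (-Real.pi)..Real.pi, tgF (cexp (θ * I - tgS n)) * cexp (-(n * θ * I)))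
      - (∫ θ in (0 - tgS n)..(0 + tgS n), tgF (cexp (θ * I - tgS n)) * cexp (-(n * θ * I)))
      - (∫ θ in (1 * (4 * Real.pi / 5) - tgS n)..(1 * (4 * Real.pi / 5) + tgS n), tgF (cexp (θ * I - tgS n)) * cexp (-(n * θ * I)))
      - (∫ θ in (-1 * (4 * Real.pi / 5) - tgS n)..(-1 * (4 * Real.pi / 5) + tgS n), tgF (cexp (θ * I - tgS n)) * cexp (-(n * θ * I))))))
      atTop (𝓝 0) := by
    refine squeeze_zero_norm' ?_ tg_scale_zero
    filter_upwards [tg_split g hg, eventually_gt_atTop 0] with n h hn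
    have hS := tgS_pos n hn
    have hL := tgL_pos n hn
    rw [norm_mul, norm_mul, Complex.norm_real, Real.norm_eq_abs, abs_of_nonneg (by positivity), ← mul_assoc,
      Complex.norm_exp]
    have : (-(tgL n : ℂ)).re = -(tgL n) := by simp
    rw [this]
    gcongr
  have hs := ((a0.add a1).add a2).add hr
  simp only [add_zero] at hs
  refine hs.congr' ?_
  filter_upwards [eventually_gt_atTop 0] with n hn
  have hc := tg_cauchy g hg (tgS n) (tgS_pos n hn) n
  have hnS : (n : ℂ) * tgS n = tgL n := by rw [← tg_nS n hn]; push_cast; ring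
  rw [hnS] at hc
  have ht := tg_trig n
  rw [hc]
  push_cast at ht ⊢
  simp only [mul_sub, mul_add]
  linear_combination (-(Real.sqrt Real.pi : ℂ)) * ht


lemma tg_const (n : ℕ) (hn : 0 < n) : Real.sqrt Real.pi * tgS n / (Real.sqrt (tgL n) * Real.pi) =
    (30 : ℝ) ^ (-(1 : ℝ) / 4) * (n : ℝ) ^ (-(3 : ℝ) / 4) := by
  have hS := tgS_pos n hn
  have hL := tgL_pos n hn
  have hn' : (0 : ℝ) < n := by exact_mod_cast hn
  have hp := Real.pi_pos
  refine (pow_left_inj₀ (by positivity) (by positivity) (by norm_num : (4 : ℕ) ≠ 0)).1 ?_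
  have e1 : Real.sqrt Real.pi ^ 4 = Real.pi ^ 2 := by
    rw [show (4 : ℕ) = 2 * 2 from rfl, pow_mul, Real.sq_sqrt hp.le]
  have e2 : Real.sqrt (tgL n) ^ 4 = Real.pi ^ 2 / 30 * n := by
    rw [show (4 : ℕ) = 2 * 2 from rfl, pow_mul, Real.sq_sqrt hL.le, tgL, Real.sq_sqrt (by positivity)]
  have e3 : tgS n ^ 4 = (Real.pi ^ 2 / 30 / n) ^ 2 := by
    rw [show (4 : ℕ) = 2 * 2 from rfl, pow_mul, tgS, Real.sq_sqrt (by positivity)]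
  have e4 : ((30 : ℝ) ^ (-(1 : ℝ) / 4)) ^ 4 = 1 / 30 := by
    rw [← Real.rpow_natCast, ← Real.rpow_mul (by norm_num)]
    norm_num [Real.rpow_neg_one]
  have e5 : ((n : ℝ) ^ (-(3 : ℝ) / 4)) ^ 4 = 1 / n ^ 3 := by
    rw [← Real.rpow_natCast, ← Real.rpow_mul hn'.le,
      show (-(3 : ℝ) / 4 * ((4 : ℕ) : ℝ)) = -((3 : ℕ) : ℝ) by norm_num, Real.rpow_neg hn'.le, Real.rpow_natCast,
      one_div]
  rw [div_pow, mul_pow, mul_pow, mul_pow, e1, e2, e3, e4, e5]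
  field_simp

lemma tg_two_L (n : ℕ) : 2 * tgL n = Real.sqrt 2 * Real.pi / Real.sqrt 15 * Real.sqrt n := by
  have hp := Real.pi_pos
  refine (pow_left_inj₀ (by unfold tgL; positivity) (by positivity) (by norm_num : (2 : ℕ) ≠ 0)).1 ?_
  rw [mul_pow, mul_pow, div_pow, mul_pow, tgL, Real.sq_sqrt (by positivity), Real.sq_sqrt (by positivity),
    Real.sq_sqrt (by positivity), Real.sq_sqrt (by positivity)]
  ring

noncomputable def tgK (n : ℕ) : ℝ := ((n : ℝ) ^ (-(3 : ℝ) / 4) / ((n : ℝ) - 1 / 3) ^ (-(3 : ℝ) / 4)) *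
  Real.exp (2 * tgL n - Real.sqrt 2 * Real.pi / Real.sqrt 15 * Real.sqrt ((n : ℝ) - 1 / 3))

lemma tgK_tendsto : Tendsto tgK atTop (𝓝 1) := by
  have hN := tendsto_natCast_atTop_atTop (R := ℝ)
  have h1 : Tendsto (fun n : ℕ => ((n : ℝ) / ((n : ℝ) - 1 / 3))) atTop (𝓝 1) := by
    have : Tendsto (fun n : ℕ => 1 + (1 / 3) / ((n : ℝ) - 1 / 3)) atTop (𝓝 (1 + 0)) := by
      refine tendsto_const_nhds.add (Tendsto.div_atTop tendsto_const_nhds ?_)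
      exact tendsto_atTop_add_const_right _ (-(1 / 3)) hN
    rw [add_zero] at this
    refine this.congr' ?_
    filter_upwards [eventually_gt_atTop 0] with n hn
    have : (1 : ℝ) ≤ n := by exact_mod_cast hn
    have h : (n : ℝ) - 1 / 3 ≠ 0 := by linarith
    rw [eq_div_iff h, add_mul, div_mul_cancel₀ _ h]; ring
  have h2 := h1.rpow_const (p := -(3 : ℝ) / 4) (Or.inl one_ne_zero)
  rw [Real.one_rpow] at h2
  have h3 : Tendsto (fun n : ℕ => Real.sqrt n - Real.sqrt ((n : ℝ) - 1 / 3)) atTop (𝓝 0) := by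
    have h0 : Tendsto (fun n : ℕ => (1 / 3) / Real.sqrt (n : ℝ)) atTop (𝓝 0) :=
      Tendsto.div_atTop tendsto_const_nhds (Real.tendsto_sqrt_atTop.comp hN)
    refine squeeze_zero' ?_ ?_ h0
    · filter_upwards with n
      exact sub_nonneg.2 (Real.sqrt_le_sqrt (by linarith))
    · filter_upwards [eventually_gt_atTop 0] with n hn
      have : (1 : ℝ) ≤ n := by exact_mod_cast hn
      have hs : 0 < Real.sqrt (n : ℝ) := Real.sqrt_pos.2 (by linarith)
      rw [le_div_iff₀ hs]
      have q1 := Real.mul_self_sqrt (by linarith : (0 : ℝ) ≤ n)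
      have q2 := Real.mul_self_sqrt (by linarith : (0 : ℝ) ≤ (n : ℝ) - 1 / 3)
      have q3 := Real.sqrt_nonneg ((n : ℝ) - 1 / 3)
      have q4 : Real.sqrt ((n : ℝ) - 1 / 3) ≤ Real.sqrt n := Real.sqrt_le_sqrt (by linarith)
      nlinarith
  have h4 := (Real.continuous_exp.tendsto _).comp (h3.const_mul (Real.sqrt 2 * Real.pi / Real.sqrt 15))
  have h5 := h2.mul h4
  rw [mul_zero, Real.exp_zero, one_mul] at h5
  refine h5.congr' ?_
  filter_upwards [eventually_gt_atTop 0] with n hn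
  have : (1 : ℝ) ≤ n := by exact_mod_cast hn
  simp only [tgK, Function.comp]
  rw [Real.div_rpow (by linarith) (by linarith), tg_two_L, mul_sub]

lemma tgm_bound : ∃ δ : ℝ, 0 < δ ∧ ∀ n : ℕ, n % 5 ≠ 1 → δ ≤ |tgm n| := by
  have hp := Real.pi_pos
  have s1 : 0 < Real.sin (Real.pi / 5) := Real.sin_pos_of_pos_of_lt_pi (by linarith) (by linarith)
  have s2 : Real.sin (Real.pi / 5) < Real.sin (2 * Real.pi / 5) :=
    Real.sin_lt_sin_of_lt_of_le_pi_div_two (by linarith) (by linarith) (by linarith)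
  refine ⟨min (Real.sin (Real.pi / 5)) (Real.sin (2 * Real.pi / 5) - Real.sin (Real.pi / 5)),
    lt_min s1 (by linarith), fun n hn => ?_⟩
  have key : ∀ r k : ℕ, n = r + 5 * k → tgm n = Real.sin (Real.pi / 5) +
      Real.sin (2 * Real.pi / 5 * (2 * (r : ℝ) + 1)) := by
    rintro r k rfl
    unfold tgm
    congr 1
    rw [← Real.sin_add_nat_mul_two_pi (2 * Real.pi / 5 * (2 * (r : ℝ) + 1)) (2 * k)]
    congr 1
    push_cast
    ring
  have hm : n = n % 5 + 5 * (n / 5) := (Nat.mod_add_div n 5).symm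
  have hk := key _ _ hm
  have hlt : n % 5 < 5 := Nat.mod_lt _ (by norm_num)
  generalize n % 5 = r at hk hn hlt
  rw [hk]
  interval_cases r
  · rw [show 2 * Real.pi / 5 * (2 * ((0 : ℕ) : ℝ) + 1) = 2 * Real.pi / 5 by push_cast; ring]
    exact (min_le_left _ _).trans ((by linarith : _ ≤ _).trans (le_abs_self _))
  · exact absurd rfl hn
  · rw [show 2 * Real.pi / 5 * (2 * ((2 : ℕ) : ℝ) + 1) = (2 : ℕ) * Real.pi by push_cast; ring, Real.sin_nat_mul_pi]
    exact (min_le_left _ _).trans ((by linarith : _ ≤ _).trans (le_abs_self _))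
  · rw [show 2 * Real.pi / 5 * (2 * ((3 : ℕ) : ℝ) + 1) = Real.pi - Real.pi / 5 + 2 * Real.pi by push_cast; ring,
      Real.sin_add_two_pi, Real.sin_pi_sub]
    exact (min_le_left _ _).trans ((by linarith : _ ≤ _).trans (le_abs_self _))
  · rw [show 2 * Real.pi / 5 * (2 * ((4 : ℕ) : ℝ) + 1) = -(2 * Real.pi / 5) + (2 : ℕ) * (2 * Real.pi) by push_cast; ring,
      Real.sin_add_nat_mul_two_pi, Real.sin_neg]
    exact (min_le_right _ _).trans ((by linarith : _ ≤ _).trans (neg_le_abs _))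

lemma tg_final (g : ℕ → ℂ) (hg : ∀ q : ℂ, ‖q‖ < 1 → HasSum (fun n : ℕ => g n * q ^ n) (tgF q)) :
    Tendsto (fun n : ℕ =>
        g n / ((((30 : ℝ) ^ (-(1 : ℝ) / 4) *
          (Real.sin (Real.pi / 5) + Real.sin (2 * Real.pi / 5 * (2 * (n : ℝ) + 1))) *
          ((n : ℝ) - 1 / 3) ^ (-(3 : ℝ) / 4) *
          Real.exp (Real.sqrt 2 * Real.pi / Real.sqrt 15 *
            Real.sqrt ((n : ℝ) - 1 / 3)) : ℝ) : ℂ)))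
      (atTop ⊓ Filter.principal {n : ℕ | n % 5 ≠ 1}) (nhds 1) := by
  obtain ⟨δ, hδ, hb⟩ := tgm_bound
  have hZ := tg_asym g hg
  set Z : ℕ → ℂ := fun n : ℕ => cexp (-(tgL n)) * ((Real.sqrt (tgL n) / tgS n : ℝ) *
    (2 * Real.pi * g n * cexp (-(tgL n)))) - ((2 * tgm n * Real.sqrt Real.pi : ℝ) : ℂ) with hZd
  have hp := Real.pi_pos
  have hsp : 0 < Real.sqrt Real.pi := Real.sqrt_pos.2 hp
  have hW : Tendsto (fun n => Z n / ((2 * tgm n * Real.sqrt Real.pi : ℝ) : ℂ))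
      (atTop ⊓ Filter.principal {n : ℕ | n % 5 ≠ 1}) (𝓝 0) := by
    have h1 := (hZ.norm.div_const (2 * δ * Real.sqrt Real.pi)).mono_left
      (inf_le_left : atTop ⊓ Filter.principal {n : ℕ | n % 5 ≠ 1} ≤ atTop)
    rw [norm_zero, zero_div] at h1
    refine squeeze_zero_norm' ?_ h1
    have : ∀ᶠ n in atTop ⊓ Filter.principal {n : ℕ | n % 5 ≠ 1}, n % 5 ≠ 1 :=
      (mem_inf_of_right (mem_principal_self _))
    filter_upwards [this] with n hn
    rw [norm_div, Complex.norm_real, Real.norm_eq_abs, abs_mul, abs_mul, abs_of_pos hsp, abs_two]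
    have := hb n hn
    gcongr
  have hK : Tendsto (fun n => ((tgK n : ℝ) : ℂ)) (atTop ⊓ Filter.principal {n : ℕ | n % 5 ≠ 1}) (𝓝 ((1 : ℝ) : ℂ)) :=
    (Complex.continuous_ofReal.tendsto _).comp (tgK_tendsto.mono_left inf_le_left)
  have hF := (hW.const_add 1).mul hK
  rw [add_zero, Complex.ofReal_one, one_mul] at hF
  refine hF.congr' ?_
  have e1 : ∀ᶠ n in atTop ⊓ Filter.principal {n : ℕ | n % 5 ≠ 1}, n % 5 ≠ 1 :=
    (mem_inf_of_right (mem_principal_self _))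
  have e2 : ∀ᶠ n in atTop ⊓ Filter.principal {n : ℕ | n % 5 ≠ 1}, 0 < n :=
    (mem_inf_of_left (eventually_gt_atTop 0))
  filter_upwards [e1, e2] with n hn h0
  have hm : tgm n ≠ 0 := by
    have := hb n hn
    intro h; rw [h, abs_zero] at this; linarith
  have hS := tgS_pos n h0
  have hL := tgL_pos n h0
  have hn1 : (1 : ℝ) ≤ n := by exact_mod_cast h0
  have hx : (0 : ℝ) < ((n : ℝ) - 1 / 3) ^ (-(3 : ℝ) / 4) := Real.rpow_pos_of_pos (by linarith) _
  have hsL : 0 < Real.sqrt (tgL n) := Real.sqrt_pos.2 hL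
  have hc := tg_const n h0
  have ha : (0 : ℝ) < (30 : ℝ) ^ (-(1 : ℝ) / 4) := by positivity
  change _ = g n / ((((30 : ℝ) ^ (-(1 : ℝ) / 4) * tgm n * ((n : ℝ) - 1 / 3) ^ (-(3 : ℝ) / 4) *
          Real.exp (Real.sqrt 2 * Real.pi / Real.sqrt 15 *
            Real.sqrt ((n : ℝ) - 1 / 3)) : ℝ) : ℂ))
  have hd : (n : ℝ) ^ (-(3 : ℝ) / 4) = Real.sqrt Real.pi * tgS n / (Real.sqrt (tgL n) * Real.pi) /
      (30 : ℝ) ^ (-(1 : ℝ) / 4) := by rw [hc]; field_simp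
  have hex : cexp (-(tgL n : ℂ)) = ((Real.exp (tgL n))⁻¹ : ℝ) := by
    rw [← Real.exp_neg]; push_cast; rfl
  have hex2 : Real.exp (2 * tgL n) = Real.exp (tgL n) ^ 2 := by
    rw [two_mul, Real.exp_add, sq]
  simp only [hZd, tgK]
  rw [hd, Real.exp_sub, hex, hex2]
  have hE := Real.exp_pos (tgL n)
  generalize Real.exp (tgL n) = E at *
  have hY := Real.exp_pos (Real.sqrt 2 * Real.pi / Real.sqrt 15 * Real.sqrt ((n : ℝ) - 1 / 3))
  generalize Real.exp (Real.sqrt 2 * Real.pi / Real.sqrt 15 * Real.sqrt ((n : ℝ) - 1 / 3)) = Y at *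
  generalize ((n : ℝ) - 1 / 3) ^ (-(3 : ℝ) / 4) = x at *
  generalize (30 : ℝ) ^ (-(1 : ℝ) / 4) = a at *
  generalize Real.sqrt (tgL n) = l at *
  generalize Real.sqrt Real.pi = sp at *
  generalize tgS n = S at *
  generalize tgm n = m at *
  have c1 : (E : ℂ) ≠ 0 := by exact_mod_cast hE.ne'
  have c2 : (Y : ℂ) ≠ 0 := by exact_mod_cast hY.ne'
  have c3 : (x : ℂ) ≠ 0 := by exact_mod_cast hx.ne'
  have c4 : (a : ℂ) ≠ 0 := by exact_mod_cast ha.ne'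
  have c5 : (l : ℂ) ≠ 0 := by exact_mod_cast hsL.ne'
  have c6 : (sp : ℂ) ≠ 0 := by exact_mod_cast hsp.ne'
  have c7 : (S : ℂ) ≠ 0 := by exact_mod_cast hS.ne'
  have c8 : (m : ℂ) ≠ 0 := by exact_mod_cast hm
  have c9 : (Real.pi : ℂ) ≠ 0 := by exact_mod_cast hp.ne'
  push_cast
  field_simp
  try ring

/-- Let `g : ℕ → ℂ` satisfy
`Σ_{n≥0} g(n)qⁿ = (q²,q⁸;q¹⁰)_∞ (q⁴,q⁶;q¹⁰)²_∞ (q²,q³;q⁵)_∞^{−2}` for `|q| < 1`. Then,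
as `n → ∞` restricted to `n ≢ 1 (mod 5)`,
`g(n) ∼ 30^{−1/4}·(sin(π/5) + sin((2π/5)(2n+1)))·(n − 1/3)^{−3/4}·exp((√2·π/√15)·√(n − 1/3))`. -/
theorem tang_coeff_asymptotic (g : ℕ → ℂ)
    (hg : ∀ q : ℂ, ‖q‖ < 1 → HasSum (fun n : ℕ => g n * q ^ n)
      ((∏' k : ℕ, (1 - q ^ (10 * k + 2)) * (1 - q ^ (10 * k + 8))) *
        (∏' k : ℕ, (1 - q ^ (10 * k + 4)) * (1 - q ^ (10 * k + 6))) ^ 2 *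
        (∏' k : ℕ, (1 - q ^ (5 * k + 2)) * (1 - q ^ (5 * k + 3))) ^ (-2 : ℤ))) :
    Tendsto (fun n : ℕ =>
        g n / ((((30 : ℝ) ^ (-(1 : ℝ) / 4) *
          (Real.sin (Real.pi / 5) + Real.sin (2 * Real.pi / 5 * (2 * (n : ℝ) + 1))) *
          ((n : ℝ) - 1 / 3) ^ (-(3 : ℝ) / 4) *
          Real.exp (Real.sqrt 2 * Real.pi / Real.sqrt 15 *
            Real.sqrt ((n : ℝ) - 1 / 3)) : ℝ) : ℂ)))
      (atTop ⊓ Filter.principal {n : ℕ | n % 5 ≠ 1}) (nhds 1) := by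
  exact tg_final g (fun q hq => hg q hq)
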